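/- arXiv:2101.04986 — 3 statements merged into one kernel-verified Lean document; each statement's English description precedes it below -/
import Mathlib

section
/- Let X₁, X₂ be Polish metric spaces, C : X₁ × 𝒫(X₂) → (−∞,+∞] lower semi-continuous, bounded from below, with C(x₁,·) convex for every x₁, and F₁, F₂ admissible entropy functions. If Λ_ET^< is nonempty, then for every μ₁ ∈ ℳ(X₁), μ₂ ∈ ℳ(X₂): sup_{(φ₁,φ₂)∈Λ_ET} Σ_{i=1}^2 ∫_{X_i} φ_i dμ_i = sup_{(φ₁,φ₂)∈Λ_ET^<} Σ_{i=1}^2 ∫_{X_i} φ_i dμ_i. -/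
open MeasureTheory Filter Set Topology
open scoped ENNReal NNReal BoundedContinuousFunction

noncomputable section

/-- The "positive part" of an extended real number, as an element of `ℝ≥0∞`. -/
def posE (a : EReal) : ℝ≥0∞ := if a = ⊤ then ⊤ else ENNReal.ofReal a.toReal

/-- Integral of an `EReal`-valued function: positive part minus negative part
(in `EReal`, so that it is always defined). -/
def eIntegral {α : Type*} [MeasurableSpace α] (μ : Measure α) (f : α → EReal) : EReal :=
  ((∫⁻ x, posE (f x) ∂μ : ℝ≥0∞) : EReal) - ((∫⁻ x, posE (-(f x)) ∂μ : ℝ≥0∞) : EReal)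

/-- The recession constant `lim_{s→∞} G(s)/s` (as a `limsup`, which coincides with the
limit for convex functions). -/
def recessionOf (G : ℝ → ℝ≥0∞) : ℝ≥0∞ :=
  Filter.limsup (fun s : ℝ => G s / ENNReal.ofReal s) Filter.atTop

/-- An admissible entropy function: a convex, lower semicontinuous function
`F : [0,∞) → [0,∞]` which is finite at some positive point. -/
structure EntropyFn where
  F : ℝ → ℝ≥0∞
  convex' : ∀ a ∈ Ici (0:ℝ), ∀ b ∈ Ici (0:ℝ), ∀ t : ℝ, 0 ≤ t → t ≤ 1 →
    F (t * a + (1 - t) * b) ≤ ENNReal.ofReal t * F a + ENNReal.ofReal (1 - t) * F b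
  lsc : LowerSemicontinuousOn F (Ici (0:ℝ))
  dom : ∃ s : ℝ, 0 < s ∧ F s ≠ ∞

namespace EntropyFn

/-- The recession constant `F'_∞ = lim_{s→∞} F(s)/s`. -/
def recC (F : EntropyFn) : ℝ≥0∞ := recessionOf F.F

/-- `F` is superlinear if `F'_∞ = ∞`. -/
def Superlinear (F : EntropyFn) : Prop := F.recC = ∞

/-- `F°(φ) := inf_{s ≥ 0} (φ·s + F(s))`, extended to `EReal` arguments. -/
def circ (F : EntropyFn) (φ : EReal) : EReal :=
  ⨅ s : Ici (0:ℝ), φ * ((s : ℝ) : EReal) + ((F.F (s : ℝ) : ℝ≥0∞) : EReal)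

/-- The (interior of the) domain of `F°` is taken inside the set where `F°` is not `-∞`. -/
def circDom (F : EntropyFn) : Set ℝ := {φ : ℝ | F.circ (φ : EReal) ≠ ⊥}

/-- The reverse entropy function `R(r) = r·F(1/r)` for `r > 0`, with `R(0) = F'_∞`. -/
def revF (F : EntropyFn) (r : ℝ) : ℝ≥0∞ :=
  if 0 < r then ENNReal.ofReal r * F.F (1 / r) else F.recC

/-- The Legendre conjugate `R*(ψ) = sup_{s ≥ 0} (s·ψ − R(s))` of the reverse function. -/
def revConj (F : EntropyFn) (ψ : ℝ) : EReal :=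
  ⨆ s : Ici (0:ℝ), (((s : ℝ) * ψ : ℝ) : EReal) - ((F.revF (s : ℝ) : ℝ≥0∞) : EReal)

end EntropyFn

/-- The entropy functional `ℱ(γ|μ) = ∫ F(dγ/dμ) dμ + F'_∞ · γ^⊥(X)`, where
`γ = (dγ/dμ)·μ + γ^⊥` is the Lebesgue decomposition of `γ` with respect to `μ`. -/
def entF {X : Type*} [MeasurableSpace X] (F : EntropyFn) (γ μ : Measure X) : ℝ≥0∞ :=
  (∫⁻ x, F.F ((γ.rnDeriv μ x).toReal) ∂μ) + F.recC * (γ.singularPart μ) Set.univ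

/-- The reverse entropy functional `ℛ(μ|γ) = ∫ R(dμ/dγ) dγ + R'_∞ · μ^⊥(X)`. -/
def revEntF {X : Type*} [MeasurableSpace X] (F : EntropyFn) (μ γ : Measure X) : ℝ≥0∞ :=
  (∫⁻ x, F.revF ((μ.rnDeriv γ x).toReal) ∂γ) + recessionOf F.revF * (μ.singularPart γ) Set.univ

section WOET

variable {X₁ X₂ : Type*} [MeasurableSpace X₁] [MeasurableSpace X₂]

/-- The weak entropy-transport cost
`ℰ_C(γ|μ₁,μ₂) = ℱ₁(γ₁|μ₁) + ℱ₂(γ₂|μ₂) + ∫ C(x₁, γ_{x₁}) dγ₁(x₁)`. -/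
def wCost [StandardBorelSpace X₂] [Nonempty X₂]
    (C : X₁ → ProbabilityMeasure X₂ → EReal) (F₁ F₂ : EntropyFn)
    (μ₁ : Measure X₁) (μ₂ : Measure X₂)
    (γ : Measure (X₁ × X₂)) (hγ : IsFiniteMeasure γ) : EReal :=
  haveI := hγ
  ((entF F₁ γ.fst μ₁ : ℝ≥0∞) : EReal) + ((entF F₂ γ.snd μ₂ : ℝ≥0∞) : EReal) +
    eIntegral γ.fst (fun x₁ => C x₁ ⟨γ.condKernel x₁, inferInstance⟩)

/-- The weak optimal entropy-transport value `ℰ_C(μ₁,μ₂)`. -/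
def wOpt [StandardBorelSpace X₂] [Nonempty X₂]
    (C : X₁ → ProbabilityMeasure X₂ → EReal) (F₁ F₂ : EntropyFn)
    (μ₁ : Measure X₁) (μ₂ : Measure X₂) : EReal :=
  sInf { e : EReal | ∃ (γ : Measure (X₁ × X₂)) (hγ : IsFiniteMeasure γ),
    e = wCost C F₁ F₂ μ₁ μ₂ γ hγ }

variable [TopologicalSpace X₁] [TopologicalSpace X₂]

/-- The dual feasible set `Λ`. -/
def lamSet (C : X₁ → ProbabilityMeasure X₂ → EReal) (F₁ F₂ : EntropyFn) :
    Set ((X₁ →ᵇ ℝ) × (X₂ →ᵇ ℝ)) :=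
  { φ | (∀ x, φ.1 x ∈ interior F₁.circDom) ∧ (∀ x, φ.2 x ∈ interior F₂.circDom) ∧
      ∀ (x₁ : X₁) (p : ProbabilityMeasure X₂),
        ((φ.1 x₁ + ∫ x₂, φ.2 x₂ ∂(p : Measure X₂) : ℝ) : EReal) ≤ C x₁ p }

/-- The dual feasible set `Λ_R`. -/
def lamRSet (C : X₁ → ProbabilityMeasure X₂ → EReal) (F₁ F₂ : EntropyFn) :
    Set ((X₁ →ᵇ ℝ) × (X₂ →ᵇ ℝ)) :=
  { φ | (∃ b : ℝ, ((b : ℝ) : EReal) < ((F₁.F 0 : ℝ≥0∞) : EReal) ∧ ∀ x, φ.1 x ≤ b) ∧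
        (∃ b : ℝ, ((b : ℝ) : EReal) < ((F₂.F 0 : ℝ≥0∞) : EReal) ∧ ∀ x, φ.2 x ≤ b) ∧
        ∀ (x₁ : X₁) (p : ProbabilityMeasure X₂),
          F₁.revConj (φ.1 x₁) + eIntegral (p : Measure X₂) (fun x₂ => F₂.revConj (φ.2 x₂))
            ≤ C x₁ p }

/-- The dual feasible set `Λ_ET` (constraints tested against all pairs of nonnegative finite
measures; on all other signed measures `ET = +∞`, so those constraints are vacuous). -/
def lamETSet [StandardBorelSpace X₂] [Nonempty X₂]
    (C : X₁ → ProbabilityMeasure X₂ → EReal) (F₁ F₂ : EntropyFn) :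
    Set ((X₁ →ᵇ ℝ) × (X₂ →ᵇ ℝ)) :=
  { φ | ∀ (μ₁ : Measure X₁) (μ₂ : Measure X₂), IsFiniteMeasure μ₁ → IsFiniteMeasure μ₂ →
      (((∫ x, φ.1 x ∂μ₁) + ∫ x, φ.2 x ∂μ₂ : ℝ) : EReal) ≤ wOpt C F₁ F₂ μ₁ μ₂ }

/-- The set `Λ_ET^<`. -/
def lamETltSet [StandardBorelSpace X₂] [Nonempty X₂]
    (C : X₁ → ProbabilityMeasure X₂ → EReal) (F₁ F₂ : EntropyFn) :
    Set ((X₁ →ᵇ ℝ) × (X₂ →ᵇ ℝ)) :=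
  { φ ∈ lamETSet C F₁ F₂ |
      (∃ b : ℝ, ((b : ℝ) : EReal) < ((F₁.F 0 : ℝ≥0∞) : EReal) ∧ ∀ x, φ.1 x ≤ b) ∧
      (∃ b : ℝ, ((b : ℝ) : EReal) < ((F₂.F 0 : ℝ≥0∞) : EReal) ∧ ∀ x, φ.2 x ≤ b) }

/-- `R_C φ(x₁) := inf_{p ∈ 𝒫(X₂)} (C(x₁,p) + ∫ φ dp)`. -/
def RCfun (C : X₁ → ProbabilityMeasure X₂ → EReal) (φ : X₂ →ᵇ ℝ) (x₁ : X₁) : EReal :=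
  ⨅ p : ProbabilityMeasure X₂, C x₁ p + ((∫ x₂, φ x₂ ∂(p : Measure X₂) : ℝ) : EReal)

/-- Property (BM) of an admissible entropy function on a space `X`. -/
def HasBM (X : Type*) [TopologicalSpace X] [MeasurableSpace X] (F : EntropyFn) : Prop :=
  ∀ ψ : X →ᵇ ℝ, (∃ b : ℝ, ((b : ℝ) : EReal) < ((F.F 0 : ℝ≥0∞) : EReal) ∧ ∀ x, ψ x ≤ b) →
    ∃ s : X → ℝ, Measurable s ∧ (∃ M : ℝ, ∀ x, |s x| ≤ M) ∧ (∀ x, 0 < s x) ∧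
      ∀ x, ((F.revF (s x) : ℝ≥0∞) : EReal) + F.revConj (ψ x) = ((s x * ψ x : ℝ) : EReal)

end WOET

/-- The functional `ET` extended to pairs of finite signed measures:
it equals `ℰ_C(μ₁,μ₂)` when both arguments are (induced by) nonnegative finite measures,
and `+∞` otherwise. -/
def ETsgn {X₁ X₂ : Type*} [MeasurableSpace X₁] [MeasurableSpace X₂]
    [StandardBorelSpace X₂] [Nonempty X₂]
    (C : X₁ → ProbabilityMeasure X₂ → EReal) (F₁ F₂ : EntropyFn)
    (ν₁ : SignedMeasure X₁) (ν₂ : SignedMeasure X₂) : EReal :=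
  sInf { e : EReal | ∃ (μ₁ : Measure X₁) (h₁ : IsFiniteMeasure μ₁)
      (μ₂ : Measure X₂) (h₂ : IsFiniteMeasure μ₂),
      ν₁ = @Measure.toSignedMeasure X₁ _ μ₁ h₁ ∧ ν₂ = @Measure.toSignedMeasure X₂ _ μ₂ h₂ ∧
      e = wOpt C F₁ F₂ μ₁ μ₂ }

section Martingale

variable {X : Set ℝ}

/-- The martingale condition for a finite measure on `X × X`:
`∫ y dγ_x(y) = x` for `γ₁`-a.e. `x`. -/
def martCond [StandardBorelSpace ↥X] [Nonempty ↥X]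
    (γ : Measure (↥X × ↥X)) (hγ : IsFiniteMeasure γ) : Prop :=
  haveI := hγ
  ∀ᵐ x ∂γ.fst, (∫ y, (y : ℝ) ∂(γ.condKernel x)) = (x : ℝ)

/-- The martingale optimal entropy transport value `ℰ_M(μ₁,μ₂)` (with an `EReal`-valued
cost `c`). -/
def eMart [StandardBorelSpace ↥X] [Nonempty ↥X]
    (c : ↥X → ↥X → EReal) (F₁ F₂ : EntropyFn) (μ₁ μ₂ : Measure ↥X) : EReal :=
  sInf { e : EReal | ∃ (γ : Measure (↥X × ↥X)) (hγ : IsFiniteMeasure γ), martCond γ hγ ∧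
    e = ((entF F₁ γ.fst μ₁ : ℝ≥0∞) : EReal) + ((entF F₂ γ.snd μ₂ : ℝ≥0∞) : EReal) +
        eIntegral γ (fun q => c q.1 q.2) }

/-- The martingale optimal entropy transport value `ℰ_M(μ₁,μ₂)` (with a `[0,∞]`-valued
cost `c`). -/
def eMartNN [StandardBorelSpace ↥X] [Nonempty ↥X]
    (c : ↥X → ↥X → ℝ≥0∞) (F₁ F₂ : EntropyFn) (μ₁ μ₂ : Measure ↥X) : EReal :=
  sInf { e : EReal | ∃ (γ : Measure (↥X × ↥X)) (hγ : IsFiniteMeasure γ), martCond γ hγ ∧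
    e = ((entF F₁ γ.fst μ₁ + entF F₂ γ.snd μ₂ + ∫⁻ q, c q.1 q.2 ∂γ : ℝ≥0∞) : EReal) }

/-- The dual feasible set `Λ_M` for the martingale problem. -/
def lamM (c : ↥X → ↥X → EReal) (F₁ F₂ : EntropyFn) : Set ((↥X →ᵇ ℝ) × (↥X →ᵇ ℝ)) :=
  { φ | (∀ x, φ.1 x ∈ interior F₁.circDom) ∧ (∀ x, φ.2 x ∈ interior F₂.circDom) ∧
      ∃ h : ↥X →ᵇ ℝ, ∀ x₁ x₂ : ↥X,
        ((φ.1 x₁ + φ.2 x₂ + h x₁ * ((x₂ : ℝ) - (x₁ : ℝ)) : ℝ) : EReal) ≤ c x₁ x₂ }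

/-- The perspective function `r·F(θ/r)` with the convention `r·F(θ/r) = θ·F'_∞` for `r = 0`. -/
def perspFn (F : EntropyFn) (r θ : ℝ) : ℝ≥0∞ :=
  if r = 0 then ENNReal.ofReal θ * F.recC else ENNReal.ofReal r * F.F (θ / r)

/-- The homogeneous marginal perspective cost `H(x₁,r₁;x₂,r₂)` (the dependence on
`(x₁,x₂)` is through the value `c = c(x₁,x₂)`). -/
def Hcost (F₁ F₂ : EntropyFn) (c : ℝ≥0∞) (r₁ r₂ : ℝ) : ℝ≥0∞ :=
  if c ≠ ∞ then
    ⨅ θ : Ioi (0:ℝ), perspFn F₁ r₁ (θ : ℝ) + perspFn F₂ r₂ (θ : ℝ) + ENNReal.ofReal (θ : ℝ) * c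
  else F₁.F 0 * ENNReal.ofReal r₁ + F₂.F 0 * ENNReal.ofReal r₂

/-- The functional `ℋ(μ₁,μ₂|γ)`. -/
def hMargFun (F₁ F₂ : EntropyFn) (c : ↥X → ↥X → ℝ≥0∞) (μ₁ μ₂ : Measure ↥X)
    (γ : Measure (↥X × ↥X)) : ℝ≥0∞ :=
  (∫⁻ q, Hcost F₁ F₂ (c q.1 q.2) ((μ₁.rnDeriv γ.fst q.1).toReal)
      ((μ₂.rnDeriv γ.snd q.2).toReal) ∂γ)
    + F₁.F 0 * (μ₁.singularPart γ.fst) Set.univ + F₂.F 0 * (μ₂.singularPart γ.snd) Set.univ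

/-- The functional `ℛ(μ₁,μ₂|γ)`. -/
def rMargFun (F₁ F₂ : EntropyFn) (c : ↥X → ↥X → ℝ≥0∞) (μ₁ μ₂ : Measure ↥X)
    (γ : Measure (↥X × ↥X)) : ℝ≥0∞ :=
  revEntF F₁ μ₁ γ.fst + revEntF F₂ μ₂ γ.snd + ∫⁻ q, c q.1 q.2 ∂γ

/-- The first `p`-homogeneous marginal of a measure on `Y × Y`, `Y = X × [0,∞)`. -/
def hMarg1 (p : ℝ) (α : Measure ((↥X × ℝ≥0) × (↥X × ℝ≥0))) : Measure ↥X :=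
  Measure.map (fun q => q.1.1) (α.withDensity fun q => (q.1.2 : ℝ≥0∞) ^ p)

/-- The second `p`-homogeneous marginal of a measure on `Y × Y`, `Y = X × [0,∞)`. -/
def hMarg2 (p : ℝ) (α : Measure ((↥X × ℝ≥0) × (↥X × ℝ≥0))) : Measure ↥X :=
  Measure.map (fun q => q.2.1) (α.withDensity fun q => (q.2.2 : ℝ≥0∞) ^ p)

/-- Membership in the homogeneous constraint set `ℋ^p_{M,≤}(μ₁,μ₂)`. -/
def memHpM (p : ℝ) (μ₁ μ₂ : Measure ↥X) (α : Measure ((↥X × ℝ≥0) × (↥X × ℝ≥0))) : Prop :=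
  IsFiniteMeasure α ∧ (∫⁻ q, (q.1.2 : ℝ≥0∞) ^ p + (q.2.2 : ℝ≥0∞) ^ p ∂α) ≠ ∞ ∧
    hMarg1 p α ≤ μ₁ ∧ hMarg2 p α ≤ μ₂ ∧
    ∀ h : ↥X →ᵇ ℝ, (∫ q, h q.1.1 * ((q.2.1 : ℝ) - (q.1.1 : ℝ)) ∂α) = 0

end Martingale

/-!
Testing `φ ∈ Λ_ET` against a Dirac mass and the zero measure, with the competitor `γ = 0`, shows
`φᵢ ≤ Fᵢ(0)` pointwise. A proper convex combination of `φ` with some `ψ ∈ Λ_ET^<` lies in the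
convex set `Λ_ET` and is uniformly strictly below `Fᵢ(0)`, so it lies in `Λ_ET^<`. Letting the
weight of `ψ` tend to zero, `Λ_ET^<` is dense in `Λ_ET` for uniform convergence, and the objective
is continuous for it.
-/

/-- The bounded continuous functions with supremum strictly below `a`. The gap is witnessed by a
real upper bound, as in `lamETltSet`, since the real supremum over an empty space is `0`. -/
def strictSublevel (X : Type*) [TopologicalSpace X] (a : EReal) : Set (X →ᵇ ℝ) :=
  {f | ∃ b : ℝ, (b : EReal) < a ∧ ∀ x, f x ≤ b}

lemma openSegment_subset_strictSublevel {X : Type*} [TopologicalSpace X] {a : EReal}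
    {f g : X →ᵇ ℝ} (hf : ∀ x, (f x : EReal) ≤ a) (hg : g ∈ strictSublevel X a) :
    openSegment ℝ f g ⊆ strictSublevel X a := by
  obtain ⟨b, hba, hgb⟩ := hg
  obtain ⟨c, hbc, hca, hfc⟩ : ∃ c : ℝ, b < c ∧ (c : EReal) ≤ a ∧ ∀ x, f x ≤ c := by
    induction a with
    | bot => exact absurd hba not_lt_bot
    | coe a => exact ⟨a, mod_cast hba, le_rfl, fun x => mod_cast hf x⟩
    | top =>
      exact ⟨max (b + 1) ‖f‖, (lt_add_one b).trans_le (le_max_left _ _), le_top,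
        fun x => (f.apply_le_norm x).trans (le_max_right _ _)⟩
  rintro _ ⟨s, t, hs, ht, hst, rfl⟩
  refine ⟨s * c + t * b, lt_of_lt_of_le ?_ hca, fun x => ?_⟩
  · have hlt : s * c + t * b < c :=
      calc s * c + t * b < s * c + t * c := by gcongr
        _ = c := by rw [← add_mul, hst, one_mul]
    exact mod_cast hlt
  · exact add_le_add (mul_le_mul_of_nonneg_left (hfc x) hs.le)
      (mul_le_mul_of_nonneg_left (hgb x) ht.le)

section DualPairing

/-- Integration against a finite measure, as a continuous linear map on bounded continuous
functions. -/
def boundedIntegralCLM {X E : Type*} [TopologicalSpace X] [MeasurableSpace X]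
    [OpensMeasurableSpace X] [NormedAddCommGroup E] [NormedSpace ℝ E]
    [SecondCountableTopology E] [MeasurableSpace E] [BorelSpace E]
    (μ : Measure X) [IsFiniteMeasure μ] : (X →ᵇ E) →L[ℝ] E :=
  LinearMap.mkContinuous
    { toFun := fun f => ∫ x, f x ∂μ
      map_add' := fun f g => integral_add (f.integrable μ) (g.integrable μ)
      map_smul' := fun c f => integral_smul c f }
    (μ.real univ) fun f => f.norm_integral_le_mul_norm μ

variable {X₁ X₂ : Type*} [TopologicalSpace X₁] [MeasurableSpace X₁] [OpensMeasurableSpace X₁]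
  [TopologicalSpace X₂] [MeasurableSpace X₂] [OpensMeasurableSpace X₂]

/-- The dual objective `(φ₁, φ₂) ↦ ∫ φ₁ dμ₁ + ∫ φ₂ dμ₂`, as a continuous linear functional. -/
def dualPairing (μ₁ : Measure X₁) (μ₂ : Measure X₂) [IsFiniteMeasure μ₁] [IsFiniteMeasure μ₂] :
    (X₁ →ᵇ ℝ) × (X₂ →ᵇ ℝ) →L[ℝ] ℝ :=
  (boundedIntegralCLM μ₁).coprod (boundedIntegralCLM μ₂)

lemma dualPairing_apply (μ₁ : Measure X₁) (μ₂ : Measure X₂) [IsFiniteMeasure μ₁]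
    [IsFiniteMeasure μ₂] (φ : (X₁ →ᵇ ℝ) × (X₂ →ᵇ ℝ)) :
    dualPairing μ₁ μ₂ φ = ∫ x, φ.1 x ∂μ₁ + ∫ x, φ.2 x ∂μ₂ :=
  rfl

end DualPairing

lemma convex_setOf_coe_linearMap_le {V : Type*} [AddCommGroup V] [Module ℝ V]
    (L : V →ₗ[ℝ] ℝ) (w : EReal) : Convex ℝ {v | (L v : EReal) ≤ w} :=
  (ordConnected_Iic.preimage_mono EReal.coe_strictMono.monotone).convex.linear_preimage L

lemma sSup_image_eq_of_subset_closure {V α : Type*} [TopologicalSpace V] [TopologicalSpace α]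
    [CompleteLattice α] [ClosedIicTopology α] {f : V → α} (hf : Continuous f) {s t : Set V}
    (hst : s ⊆ t) (hts : t ⊆ closure s) : sSup (f '' t) = sSup (f '' s) :=
  have hts' : f '' t ⊆ closure (f '' s) :=
    (image_mono hts).trans (image_closure_subset_closure_image hf)
  (isLUB_sSup _).unique
    ((isLUB_iff_of_subset_of_subset_closure (image_mono hst) hts').1 (isLUB_sSup _))

lemma entF_zero_left {X : Type*} [MeasurableSpace X] (F : EntropyFn) (μ : Measure X) :
    entF F 0 μ = F.F 0 * μ univ := by
  have hF : ∫⁻ x, F.F (((0 : Measure X).rnDeriv μ x).toReal) ∂μ = ∫⁻ _, F.F 0 ∂μ := by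
    refine lintegral_congr_ae ?_
    filter_upwards [Measure.rnDeriv_zero μ] with x hx
    simp [hx]
  simp [entF, hF]

section DualFeasible

variable {X₁ X₂ : Type*} [MeasurableSpace X₁] [MeasurableSpace X₂] [StandardBorelSpace X₂]
  [Nonempty X₂] {C : X₁ → ProbabilityMeasure X₂ → EReal} {F₁ F₂ : EntropyFn}

lemma wOpt_le_entF_zero (μ₁ : Measure X₁) (μ₂ : Measure X₂) :
    wOpt C F₁ F₂ μ₁ μ₂ ≤
      ((F₁.F 0 * μ₁ univ : ℝ≥0∞) : EReal) + ((F₂.F 0 * μ₂ univ : ℝ≥0∞) : EReal) := by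
  have hcost : wCost C F₁ F₂ μ₁ μ₂ 0 inferInstance =
      ((F₁.F 0 * μ₁ univ : ℝ≥0∞) : EReal) + ((F₂.F 0 * μ₂ univ : ℝ≥0∞) : EReal) := by
    simp [wCost, eIntegral, entF_zero_left]
  rw [← hcost]
  exact sInf_le ⟨0, inferInstance, rfl⟩

variable [TopologicalSpace X₁] [TopologicalSpace X₂] {φ : (X₁ →ᵇ ℝ) × (X₂ →ᵇ ℝ)}

lemma fst_le_of_mem_lamETSet [OpensMeasurableSpace X₁] (hφ : φ ∈ lamETSet C F₁ F₂) (x : X₁) :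
    (φ.1 x : EReal) ≤ F₁.F 0 := by
  have h := (hφ (Measure.dirac x) 0 inferInstance inferInstance).trans (wOpt_le_entF_zero _ _)
  simpa [integral_dirac' _ x φ.1.continuous.stronglyMeasurable] using h

lemma snd_le_of_mem_lamETSet [OpensMeasurableSpace X₂] (hφ : φ ∈ lamETSet C F₁ F₂) (x : X₂) :
    (φ.2 x : EReal) ≤ F₂.F 0 := by
  have h := (hφ 0 (Measure.dirac x) inferInstance inferInstance).trans (wOpt_le_entF_zero _ _)
  simpa [integral_dirac' _ x φ.2.continuous.stronglyMeasurable] using h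

variable [OpensMeasurableSpace X₁] [OpensMeasurableSpace X₂]

lemma convex_lamETSet : Convex ℝ (lamETSet C F₁ F₂) :=
  fun _ hφ _ hψ _ _ hs ht hst μ₁ μ₂ _ _ =>
    convex_setOf_coe_linearMap_le (dualPairing μ₁ μ₂).toLinearMap (wOpt C F₁ F₂ μ₁ μ₂)
      (hφ μ₁ μ₂ inferInstance inferInstance) (hψ μ₁ μ₂ inferInstance inferInstance) hs ht hst

lemma openSegment_subset_lamETltSet {ψ : (X₁ →ᵇ ℝ) × (X₂ →ᵇ ℝ)} (hφ : φ ∈ lamETSet C F₁ F₂)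
    (hψ : ψ ∈ lamETltSet C F₁ F₂) : openSegment ℝ φ ψ ⊆ lamETltSet C F₁ F₂ := by
  obtain ⟨hψΛ, hψ₁, hψ₂⟩ := hψ
  intro χ hχ
  obtain ⟨hχ₁, hχ₂⟩ := Prod.openSegment_subset φ ψ hχ
  exact ⟨convex_lamETSet.openSegment_subset hφ hψΛ hχ,
    openSegment_subset_strictSublevel (fst_le_of_mem_lamETSet hφ) hψ₁ hχ₁,
    openSegment_subset_strictSublevel (snd_le_of_mem_lamETSet hφ) hψ₂ hχ₂⟩

lemma lamETSet_subset_closure_lamETltSet (hne : (lamETltSet C F₁ F₂).Nonempty) :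
    lamETSet C F₁ F₂ ⊆ closure (lamETltSet C F₁ F₂) := by
  obtain ⟨ψ, hψ⟩ := hne
  intro φ hφ
  exact closure_mono (openSegment_subset_lamETltSet hφ hψ)
    (segment_subset_closure_openSegment (left_mem_segment ℝ φ ψ))

end DualFeasible

theorem stmt9_general
    {X₁ : Type*} [TopologicalSpace X₁] [MeasurableSpace X₁] [OpensMeasurableSpace X₁]
    {X₂ : Type*} [TopologicalSpace X₂] [MeasurableSpace X₂] [OpensMeasurableSpace X₂]
    [StandardBorelSpace X₂] [Nonempty X₂]
    (C : X₁ → ProbabilityMeasure X₂ → EReal) (F₁ F₂ : EntropyFn)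
    (hne : (lamETltSet C F₁ F₂).Nonempty)
    (μ₁ : Measure X₁) (μ₂ : Measure X₂) [IsFiniteMeasure μ₁] [IsFiniteMeasure μ₂] :
    sSup { e : EReal | ∃ φ ∈ lamETSet C F₁ F₂,
        e = (((∫ x, φ.1 x ∂μ₁) + ∫ x, φ.2 x ∂μ₂ : ℝ) : EReal) }
      = sSup { e : EReal | ∃ φ ∈ lamETltSet C F₁ F₂,
          e = (((∫ x, φ.1 x ∂μ₁) + ∫ x, φ.2 x ∂μ₂ : ℝ) : EReal) } := by
  have hcont : Continuous fun φ => (dualPairing μ₁ μ₂ φ : EReal) :=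
    continuous_coe_real_ereal.comp (dualPairing μ₁ μ₂).continuous
  have hsub : lamETltSet C F₁ F₂ ⊆ lamETSet C F₁ F₂ := fun _ hφ => hφ.1
  simpa only [image, dualPairing_apply, eq_comm] using
    sSup_image_eq_of_subset_closure hcont hsub (lamETSet_subset_closure_lamETltSet hne)

theorem stmt9
    {X₁ : Type*} [MetricSpace X₁] [PolishSpace X₁] [MeasurableSpace X₁] [BorelSpace X₁]
    {X₂ : Type*} [MetricSpace X₂] [PolishSpace X₂] [MeasurableSpace X₂] [BorelSpace X₂]
    [Nonempty X₂]
    (C : X₁ → ProbabilityMeasure X₂ → EReal)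
    (hClsc : LowerSemicontinuous fun q : X₁ × ProbabilityMeasure X₂ => C q.1 q.2)
    (hCbdd : ∃ K : ℝ, ∀ x p, (K : EReal) ≤ C x p)
    (hCconv : ∀ (x : X₁) (p q m : ProbabilityMeasure X₂) (t : ℝ), 0 ≤ t → t ≤ 1 →
      (m : Measure X₂) = ENNReal.ofReal t • (p : Measure X₂)
          + ENNReal.ofReal (1 - t) • (q : Measure X₂) →
      C x m ≤ (t : EReal) * C x p + ((1 - t : ℝ) : EReal) * C x q)
    (F₁ F₂ : EntropyFn)
    (hne : (lamETltSet C F₁ F₂).Nonempty)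
    (μ₁ : Measure X₁) (μ₂ : Measure X₂) [IsFiniteMeasure μ₁] [IsFiniteMeasure μ₂] :
    sSup { e : EReal | ∃ φ ∈ lamETSet C F₁ F₂,
        e = (((∫ x, φ.1 x ∂μ₁) + ∫ x, φ.2 x ∂μ₂ : ℝ) : EReal) }
      = sSup { e : EReal | ∃ φ ∈ lamETltSet C F₁ F₂,
          e = (((∫ x, φ.1 x ∂μ₁) + ∫ x, φ.2 x ∂μ₂ : ℝ) : EReal) } := by
  exact stmt9_general C F₁ F₂ hne μ₁ μ₂
end
end

section
/- Let X₁, X₂ be Polish metric spaces, C : X₁ × 𝒫(X₂) → (−∞,+∞] lower semi-continuous, bounded from below, with C(x₁,·) convex for every x₁, and F₁, F₂ superlinear admissible entropy functions. Then the functional ET : ℳ_s(X₁)×ℳ_s(X₂) → (−∞,+∞] is convex and positively one-homogeneous, i.e. ET(λμ₁, λμ₂) = λ ET(μ₁,μ₂) for every λ ≥ 0, μ₁ ∈ ℳ_s(X₁), μ₂ ∈ ℳ_s(X₂). -/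
open MeasureTheory Filter Set Topology
open scoped ENNReal NNReal BoundedContinuousFunction

noncomputable section

/-
The perspective function `(s, r) ↦ r F(s / r)` is sublinear, hence so is `(γ, μ) ↦ ℱ(γ|μ)`. The
disintegration of a sum `γ + γ'` is, at each point, a convex mixture of the disintegrations of `γ`
and `γ'`, so convexity of `C` makes the transport term subadditive in `γ`. Thus `ℰ_C(γ|μ₁,μ₂)` is
jointly sublinear in `(γ, μ₁, μ₂)`, and this passes to the infimum over `γ` as long as that infimum
is not `-∞`. If `C ≥ -k`, the transport term is at least `-k γ(X₁ × X₂)`, a loss which the entropies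
compensate up to a multiple of the masses of `μ₁` and `μ₂` because `k < F₁'_∞ + F₂'_∞`.

The integrand `x ↦ C(x, γ_x)` is measurable because the weak topology of `𝒫(X₂)` has a countable
subbasis made of sets `{p | r < p(U)}`.
-/

section ProbabilityMeasureBorel

variable {X : Type*} [PseudoMetricSpace X] [MeasurableSpace X]

theorem isOpen_setOf_lt_toMeasure [OpensMeasurableSpace X] {U : Set X} (hU : IsOpen U)
    (r : ℝ≥0∞) : IsOpen {p : ProbabilityMeasure X | r < (p : Measure X) U} := by
  have hlsc : LowerSemicontinuous fun p : ProbabilityMeasure X => (p : Measure X) U := fun p =>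
    lowerSemicontinuousAt_iff_le_liminf.2
      (ProbabilityMeasure.le_liminf_measure_open_of_tendsto tendsto_id hU)
  exact hlsc.isOpen_preimage r

variable [SecondCountableTopology X]

variable (X) in
/-- A countable subbasis of the weak topology on `ProbabilityMeasure X`: the sets of measures
giving mass larger than `r` to `U`, for `r` in a dense sequence of `ℝ≥0∞` and `U` a finite union
of sets of the countable basis of `X`. -/
def weakSubbasis : Set (Set (ProbabilityMeasure X)) :=
  range fun i : Finset (TopologicalSpace.countableBasis X) × ℕ =>
    {p | TopologicalSpace.denseSeq ℝ≥0∞ i.2 < (p : Measure X) (⋃ U ∈ i.1, (U : Set X))}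

theorem countable_weakSubbasis : (weakSubbasis X).Countable :=
  have := (TopologicalSpace.countable_countableBasis X).to_subtype
  countable_range _

theorem exists_finset_countableBasis_lt_measure (μ : Measure X) {G : Set X} (hG : IsOpen G)
    {r : ℝ≥0∞} (hr : r < μ G) : ∃ s : Finset (TopologicalSpace.countableBasis X),
      (⋃ U ∈ s, (U : Set X)) ⊆ G ∧ r < μ (⋃ U ∈ s, (U : Set X)) := by
  classical
  have := (TopologicalSpace.countable_countableBasis X).to_subtype
  let T (s : Finset (TopologicalSpace.countableBasis X)) : Set X :=
    ⋃ U ∈ s.filter fun U : TopologicalSpace.countableBasis X => (U : Set X) ⊆ G, (U : Set X)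
  have hTG (s) : T s ⊆ G := iUnion₂_subset fun U hU => (Finset.mem_filter.1 hU).2
  have hT : Directed (· ⊆ ·) T := Monotone.directed_le fun s t hst =>
    biUnion_subset_biUnion_left (Finset.filter_subset_filter _ hst)
  have hGT : G ⊆ ⋃ s, T s := fun x hx => by
    obtain ⟨U, hU, hxU, hUG⟩ :=
      (TopologicalSpace.isBasis_countableBasis X).exists_subset_of_mem_open hx hG
    exact mem_iUnion.2 ⟨{⟨U, hU⟩}, mem_iUnion₂.2 ⟨⟨U, hU⟩, by simpa using hUG, hxU⟩⟩
  have hlt : r < ⨆ s, μ (T s) := hT.measure_iUnion ▸ hr.trans_le (measure_mono hGT)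
  obtain ⟨s, hs⟩ := lt_iSup_iff.1 hlt
  exact ⟨_, hTG s, hs⟩

theorem eventually_lt_toMeasure_generateFrom (p : ProbabilityMeasure X) {G : Set X}
    (hG : IsOpen G) {r : ℝ≥0∞} (hr : r < (p : Measure X) G) :
    ∀ᶠ q : ProbabilityMeasure X in @nhds _ (TopologicalSpace.generateFrom (weakSubbasis X)) p,
      r < (q : Measure X) G := by
  obtain ⟨_, ⟨n, rfl⟩, hrn, hnG⟩ :=
    (TopologicalSpace.denseRange_denseSeq ℝ≥0∞).exists_between hr
  obtain ⟨s, hsG, hs⟩ := exists_finset_countableBasis_lt_measure (p : Measure X) hG hnG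
  have hmem : {q : ProbabilityMeasure X | TopologicalSpace.denseSeq ℝ≥0∞ n <
      (q : Measure X) (⋃ U ∈ s, (U : Set X))} ∈ weakSubbasis X := ⟨(s, n), rfl⟩
  filter_upwards [@IsOpen.mem_nhds _ (_) _ _
    (TopologicalSpace.isOpen_generateFrom_of_mem hmem) hs] with q hq
  exact hrn.trans (hq.trans_le (measure_mono hsG))

variable [OpensMeasurableSpace X]

theorem isOpen_of_mem_weakSubbasis {A : Set (ProbabilityMeasure X)} (hA : A ∈ weakSubbasis X) :
    IsOpen A := by
  obtain ⟨i, rfl⟩ := hA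
  exact isOpen_setOf_lt_toMeasure
    (isOpen_biUnion fun U _ => TopologicalSpace.isOpen_of_mem_countableBasis U.2) _

theorem topology_eq_generateFrom_weakSubbasis :
    (inferInstance : TopologicalSpace (ProbabilityMeasure X)) =
      TopologicalSpace.generateFrom (weakSubbasis X) := by
  refine le_antisymm (le_generateFrom fun A => isOpen_of_mem_weakSubbasis)
    (le_of_nhds_le_nhds fun p => ?_)
  have : @SecondCountableTopology _ (TopologicalSpace.generateFrom (weakSubbasis X)) :=
    @SecondCountableTopology.mk _ (_) ⟨_, countable_weakSubbasis, rfl⟩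
  have : (@nhds _ (TopologicalSpace.generateFrom (weakSubbasis X)) p).IsCountablyGenerated :=
    @FirstCountableTopology.nhds_generated_countable _ (_) inferInstance p
  refine tendsto_of_forall_isOpen_le_liminf' (μs := id) fun G hG =>
    le_of_forall_lt fun r hr => ?_
  obtain ⟨r', hrr', hr'⟩ := exists_between hr
  exact hrr'.trans_le (le_liminf_of_le (by isBoundedDefault)
    ((eventually_lt_toMeasure_generateFrom p hG hr').mono fun q => le_of_lt))

theorem secondCountableTopology_probabilityMeasure :
    SecondCountableTopology (ProbabilityMeasure X) :=
  ⟨⟨_, countable_weakSubbasis, topology_eq_generateFrom_weakSubbasis⟩⟩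

theorem opensMeasurableSpace_probabilityMeasure :
    OpensMeasurableSpace (ProbabilityMeasure X) := by
  have : SecondCountableTopology (ProbabilityMeasure X) :=
    secondCountableTopology_probabilityMeasure
  constructor
  rw [borel_eq_generateFrom_of_subbasis topology_eq_generateFrom_weakSubbasis]
  refine MeasurableSpace.generateFrom_le ?_
  rintro _ ⟨⟨s, n⟩, rfl⟩
  have hs : MeasurableSet (⋃ U ∈ s, (U : Set X)) := s.measurableSet_biUnion fun U _ =>
    (TopologicalSpace.isOpen_of_mem_countableBasis U.2).measurableSet
  exact measurableSet_lt measurable_const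
    ((Measure.measurable_coe hs).comp measurable_subtype_coe)

theorem measurable_of_lowerSemicontinuous_prod_probabilityMeasure {Y : Type*}
    [TopologicalSpace Y] [SecondCountableTopology Y] [MeasurableSpace Y]
    [OpensMeasurableSpace Y] {f : Y × ProbabilityMeasure X → EReal}
    (hf : LowerSemicontinuous f) : Measurable f := by
  have := secondCountableTopology_probabilityMeasure (X := X)
  have := opensMeasurableSpace_probabilityMeasure (X := X)
  exact hf.measurable

end ProbabilityMeasureBorel

section Entropy

namespace EntropyFn

variable (F : EntropyFn)

theorem measurable_comp {X : Type*} [MeasurableSpace X] {g : X → ℝ} (hg : Measurable g)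
    (hg₀ : ∀ x, 0 ≤ g x) : Measurable fun x => F.F (g x) := by
  have hlsc : LowerSemicontinuous fun s : ℝ => F.F (max s 0) :=
    lowerSemicontinuousOn_univ_iff.1 <|
      F.lsc.comp (g := fun s : ℝ => max s 0) (by fun_prop) fun s _ => le_max_right s 0
  simpa only [Function.comp_def, max_eq_left (hg₀ _)] using hlsc.measurable.comp hg

theorem apply_add_le_of_le_mul {a s N : ℝ} (ha : 0 ≤ a) (hs : 0 ≤ s) (hN : a + s ≤ N)
    (haN : a < N) {c : ℝ≥0∞} (hc : F.F N ≤ c * ENNReal.ofReal N) :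
    F.F (a + s) ≤ F.F a + ENNReal.ofReal (s * (N / (N - a))) * c := by
  have hNa : 0 < N - a := sub_pos.2 haN
  have ht₀ : 0 ≤ s / (N - a) := by positivity
  have ht₁ : s / (N - a) ≤ 1 := (div_le_one hNa).2 (by linarith)
  have hcomb : s / (N - a) * N + (1 - s / (N - a)) * a = a + s := by field_simp; ring
  calc F.F (a + s)
      ≤ ENNReal.ofReal (s / (N - a)) * F.F N + ENNReal.ofReal (1 - s / (N - a)) * F.F a :=
        hcomb ▸ F.convex' N (ha.trans haN.le) a ha _ ht₀ ht₁
    _ ≤ ENNReal.ofReal (s / (N - a)) * (c * ENNReal.ofReal N) + 1 * F.F a := by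
        gcongr
        exact ENNReal.ofReal_le_one.2 (by linarith)
    _ = F.F a + ENNReal.ofReal (s * (N / (N - a))) * c := by
        rw [one_mul, add_comm, mul_comm c, ← mul_assoc, ← ENNReal.ofReal_mul ht₀, mul_div_assoc',
          div_mul_eq_mul_div]

theorem apply_add_le_of_recC_lt {a s : ℝ} (ha : 0 ≤ a) (hs : 0 < s) {c : ℝ≥0∞}
    (hc : F.recC < c) (hc_top : c ≠ ∞) : F.F (a + s) ≤ F.F a + ENNReal.ofReal s * c := by
  have hquot : Tendsto (fun N : ℝ => N / (N - a)) atTop (𝓝 1) := by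
    have hsub : Tendsto (fun N : ℝ => N - a) atTop atTop :=
      tendsto_atTop_add_const_right _ (-a) tendsto_id
    have hadd : Tendsto (fun N : ℝ => 1 + a / (N - a)) atTop (𝓝 1) := by
      simpa using (tendsto_const_nhds.div_atTop hsub).const_add 1
    refine hadd.congr' ((eventually_gt_atTop a).mono fun N hN => ?_)
    have := (sub_pos.2 hN).ne'
    field_simp
    ring
  have hlim : Tendsto (fun N : ℝ => F.F a + ENNReal.ofReal (s * (N / (N - a))) * c) atTop
      (𝓝 (F.F a + ENNReal.ofReal s * c)) := by
    simpa using (ENNReal.Tendsto.mul_const (ENNReal.tendsto_ofReal (hquot.const_mul s))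
      (Or.inr hc_top)).const_add (F.F a)
  have hlt : ∀ᶠ N : ℝ in atTop, F.F N / ENNReal.ofReal N < c := eventually_lt_of_limsup_lt hc
  refine ge_of_tendsto hlim ?_
  filter_upwards [hlt, eventually_ge_atTop (a + s), eventually_gt_atTop 0] with N hN haN hN₀
  exact F.apply_add_le_of_le_mul ha hs.le haN (by linarith)
    ((ENNReal.div_le_iff (ENNReal.ofReal_pos.2 hN₀).ne' ENNReal.ofReal_ne_top).1 hN.le)

theorem apply_add_le {a s : ℝ} (ha : 0 ≤ a) (hs : 0 ≤ s) :
    F.F (a + s) ≤ F.F a + ENNReal.ofReal s * F.recC := by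
  rcases hs.eq_or_lt with rfl | hs
  · simp
  rcases eq_top_or_lt_top F.recC with h | h
  · simp [h, ENNReal.mul_top (ENNReal.ofReal_pos.2 hs).ne']
  have := nhdsGT_neBot_of_exists_gt ⟨∞, h⟩
  have hcont : Tendsto (fun c => F.F a + ENNReal.ofReal s * c) (𝓝[>] F.recC)
      (𝓝 (F.F a + ENNReal.ofReal s * F.recC)) :=
    ((ENNReal.continuous_const_mul ENNReal.ofReal_ne_top).const_add _).continuousWithinAt
  refine ge_of_tendsto hcont ?_
  filter_upwards [self_mem_nhdsWithin, mem_nhdsWithin_of_mem_nhds (Iio_mem_nhds h)] with c hc hc'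
  exact F.apply_add_le_of_recC_lt ha hs hc hc'.ne

theorem exists_gt_mul_add_le {a : ℝ≥0∞} (ha : a < F.recC) {A : ℝ≥0∞} (hA : A ≠ ∞) (s₀ : ℝ) :
    ∃ s > s₀, a * ENNReal.ofReal s + A ≤ F.F s := by
  obtain ⟨b, hab, hb⟩ := exists_between ha
  have hfreq : ∃ᶠ s : ℝ in atTop, b < F.F s / ENNReal.ofReal s := frequently_lt_of_lt_limsup
    (by isBoundedDefault) hb
  have hbig : ∀ᶠ s : ℝ in atTop, A < (b - a) * ENNReal.ofReal s :=
    (ENNReal.Tendsto.const_mul ENNReal.tendsto_ofReal_atTop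
      (Or.inl ENNReal.top_ne_zero)).eventually_const_lt
      (by rwa [ENNReal.mul_top (tsub_pos_of_lt hab).ne', lt_top_iff_ne_top])
  obtain ⟨s, hbs, hAs, hs⟩ :=
    (hfreq.and_eventually (hbig.and (eventually_gt_atTop s₀))).exists
  refine ⟨s, hs, ?_⟩
  calc a * ENNReal.ofReal s + A ≤ a * ENNReal.ofReal s + (b - a) * ENNReal.ofReal s := by gcongr
    _ = b * ENNReal.ofReal s := by rw [← add_mul, add_tsub_cancel_of_le hab.le]
    _ ≤ F.F s := ENNReal.mul_le_of_le_div hbs.le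

theorem mul_le_of_mul_add_le {a : ℝ≥0∞} {s₀ σ s : ℝ} (hs₀ : 0 ≤ s₀) (hF : F.F s₀ ≠ ∞)
    (hσ : s₀ < σ) (hσs : σ ≤ s) (hFσ : a * ENNReal.ofReal σ + F.F s₀ ≤ F.F σ) :
    a * ENNReal.ofReal s ≤ F.F s := by
  have hs : 0 < s - s₀ := by linarith
  set t := (s - σ) / (s - s₀) with ht
  have ht₀ : 0 ≤ t := div_nonneg (by linarith) hs.le
  have ht₁ : 0 < 1 - t := by
    rw [sub_pos, ht, div_lt_one hs]; linarith
  have hcomb : t * s₀ + (1 - t) * s = σ := by rw [ht]; field_simp; ring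
  have hconv : a * ENNReal.ofReal σ + F.F s₀ ≤ ENNReal.ofReal (1 - t) * F.F s + F.F s₀ :=
    calc a * ENNReal.ofReal σ + F.F s₀ ≤ F.F (t * s₀ + (1 - t) * s) := hcomb ▸ hFσ
      _ ≤ ENNReal.ofReal t * F.F s₀ + ENNReal.ofReal (1 - t) * F.F s :=
        F.convex' s₀ hs₀ s (by simp only [mem_Ici]; linarith) t ht₀ (by linarith)
      _ ≤ 1 * F.F s₀ + ENNReal.ofReal (1 - t) * F.F s := by
        gcongr
        exact ENNReal.ofReal_le_one.2 (by linarith)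
      _ = ENNReal.ofReal (1 - t) * F.F s + F.F s₀ := by rw [one_mul, add_comm]
  refine (ENNReal.mul_le_mul_iff_right (ENNReal.ofReal_pos.2 ht₁).ne' ENNReal.ofReal_ne_top).1 ?_
  calc ENNReal.ofReal (1 - t) * (a * ENNReal.ofReal s)
      = a * ENNReal.ofReal ((1 - t) * s) := by rw [ENNReal.ofReal_mul ht₁.le, mul_left_comm]
    _ ≤ a * ENNReal.ofReal σ := by
        gcongr
        linarith [mul_nonneg ht₀ hs₀]
    _ ≤ ENNReal.ofReal (1 - t) * F.F s := (ENNReal.add_le_add_iff_right hF).1 hconv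

theorem exists_mul_le_add {a : ℝ≥0∞} (ha : a < F.recC ∨ a = 0) :
    ∃ M : ℝ≥0, ∀ s : ℝ, a * ENNReal.ofReal s ≤ F.F s + M := by
  rcases ha with ha | rfl
  swap
  · exact ⟨0, fun s => by simp⟩
  obtain ⟨s₀, hs₀, hF⟩ := F.dom
  obtain ⟨σ, hσ, hFσ⟩ := F.exists_gt_mul_add_le ha hF s₀
  have haσ : a * ENNReal.ofReal σ ≠ ∞ := ENNReal.mul_ne_top ha.ne_top ENNReal.ofReal_ne_top
  lift a * ENNReal.ofReal σ to ℝ≥0 using haσ with M hM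
  refine ⟨M, fun s => ?_⟩
  rcases le_total s σ with hs | hs
  · exact (hM ▸ by gcongr : a * ENNReal.ofReal s ≤ M).trans le_add_self
  · exact (F.mul_le_of_mul_add_le hs₀.le hF hσ hs (hM ▸ hFσ)).trans le_self_add

theorem perspFn_zero_left (θ : ℝ) : perspFn F 0 θ = ENNReal.ofReal θ * F.recC :=
  if_pos rfl

theorem perspFn_of_ne_zero {r : ℝ} (hr : r ≠ 0) (θ : ℝ) :
    perspFn F r θ = ENNReal.ofReal r * F.F (θ / r) :=
  if_neg hr

theorem measurable_perspFn {X : Type*} [MeasurableSpace X] {r θ : X → ℝ} (hr : Measurable r)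
    (hr₀ : ∀ x, 0 ≤ r x) (hθ : Measurable θ) (hθ₀ : ∀ x, 0 ≤ θ x) :
    Measurable fun x => perspFn F (r x) (θ x) :=
  Measurable.ite (hr (measurableSet_singleton 0)) (hθ.ennreal_ofReal.mul_const _)
    (hr.ennreal_ofReal.mul (F.measurable_comp (hθ.div hr) fun x => div_nonneg (hθ₀ x) (hr₀ x)))

theorem perspFn_add_zero_le {r θ θ' : ℝ} (hr : 0 ≤ r) (hθ : 0 ≤ θ) (hθ' : 0 ≤ θ') :
    perspFn F r (θ + θ') ≤ perspFn F r θ + perspFn F 0 θ' := by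
  rw [perspFn_zero_left]
  rcases hr.eq_or_lt with rfl | hr
  · rw [perspFn_zero_left, perspFn_zero_left, ENNReal.ofReal_add hθ hθ', add_mul]
  rw [perspFn_of_ne_zero F hr.ne', perspFn_of_ne_zero F hr.ne', add_div]
  calc ENNReal.ofReal r * F.F (θ / r + θ' / r)
      ≤ ENNReal.ofReal r * (F.F (θ / r) + ENNReal.ofReal (θ' / r) * F.recC) := by
        gcongr
        exact F.apply_add_le (by positivity) (by positivity)
    _ = ENNReal.ofReal r * F.F (θ / r) + ENNReal.ofReal θ' * F.recC := by
        rw [mul_add, ← mul_assoc, ← ENNReal.ofReal_mul hr.le, mul_div_cancel₀ _ hr.ne']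

theorem perspFn_add_le_of_pos {r r' θ θ' : ℝ} (hr : 0 < r) (hr' : 0 < r') (hθ : 0 ≤ θ)
    (hθ' : 0 ≤ θ') : perspFn F (r + r') (θ + θ') ≤ perspFn F r θ + perspFn F r' θ' := by
  have hrr' : 0 < r + r' := by positivity
  have ht₁ : 1 - r / (r + r') = r' / (r + r') := by field_simp; ring
  have hcomb : r / (r + r') * (θ / r) + (1 - r / (r + r')) * (θ' / r') =
      (θ + θ') / (r + r') := by
    rw [ht₁]; field_simp
  rw [perspFn_of_ne_zero F hrr'.ne', perspFn_of_ne_zero F hr.ne', perspFn_of_ne_zero F hr'.ne']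
  calc ENNReal.ofReal (r + r') * F.F ((θ + θ') / (r + r'))
      ≤ ENNReal.ofReal (r + r') * (ENNReal.ofReal (r / (r + r')) * F.F (θ / r) +
          ENNReal.ofReal (1 - r / (r + r')) * F.F (θ' / r')) := by
        gcongr
        exact hcomb ▸ F.convex' _ (div_nonneg hθ hr.le) _ (div_nonneg hθ' hr'.le) _ (by positivity)
          ((div_le_one hrr').2 (by linarith))
    _ = ENNReal.ofReal r * F.F (θ / r) + ENNReal.ofReal r' * F.F (θ' / r') := by
        rw [ht₁, mul_add, ← mul_assoc, ← mul_assoc, ← ENNReal.ofReal_mul hrr'.le,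
          ← ENNReal.ofReal_mul hrr'.le, mul_div_cancel₀ _ hrr'.ne', mul_div_cancel₀ _ hrr'.ne']

theorem perspFn_add_le {r r' θ θ' : ℝ} (hr : 0 ≤ r) (hr' : 0 ≤ r') (hθ : 0 ≤ θ)
    (hθ' : 0 ≤ θ') : perspFn F (r + r') (θ + θ') ≤ perspFn F r θ + perspFn F r' θ' := by
  rcases hr.eq_or_lt with rfl | hr
  · rw [zero_add, add_comm θ, add_comm (perspFn F 0 θ)]
    exact F.perspFn_add_zero_le hr' hθ' hθ
  rcases hr'.eq_or_lt with rfl | hr'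
  · rw [add_zero]
    exact F.perspFn_add_zero_le hr.le hθ hθ'
  exact F.perspFn_add_le_of_pos hr hr' hθ hθ'

end EntropyFn

variable {X : Type*} [MeasurableSpace X] (F : EntropyFn)

theorem rnDeriv_eq_singularPart_add_mul (γ μ σ : Measure X) [SigmaFinite γ] [SigmaFinite μ]
    [SigmaFinite σ] (hμ : μ ≪ σ) : γ.rnDeriv σ =ᵐ[σ] fun x =>
      (γ.singularPart μ).rnDeriv σ x + γ.rnDeriv μ x * μ.rnDeriv σ x := by
  have hadd := Measure.rnDeriv_add' (γ.singularPart μ) (μ.withDensity (γ.rnDeriv μ)) σ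
  rw [← Measure.haveLebesgueDecomposition_add γ μ] at hadd
  filter_upwards [hadd, Measure.rnDeriv_withDensity_left_of_absolutelyContinuous hμ
    (Measure.measurable_rnDeriv γ μ).aemeasurable] with x hx hx'
  rw [hx, Pi.add_apply, hx']

theorem ae_rnDeriv_ne_zero_imp {μ σ : Measure X} [SigmaFinite μ] [SigmaFinite σ] (hμ : μ ≪ σ)
    {p : X → Prop} (hp : ∀ᵐ x ∂μ, p x) : ∀ᵐ x ∂σ, μ.rnDeriv σ x ≠ 0 → p x := by
  rw [← Measure.withDensity_rnDeriv_eq μ σ hμ] at hp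
  exact (ae_withDensity_iff (Measure.measurable_rnDeriv μ σ)).1 hp

theorem perspFn_rnDeriv_ae_eq (γ μ σ : Measure X) [SigmaFinite γ] [SigmaFinite μ]
    [SigmaFinite σ] (hμ : μ ≪ σ) :
    (fun x => perspFn F (μ.rnDeriv σ x).toReal (γ.rnDeriv σ x).toReal) =ᵐ[σ] fun x =>
      μ.rnDeriv σ x * F.F (γ.rnDeriv μ x).toReal + F.recC * (γ.singularPart μ).rnDeriv σ x := by
  have hs : ∀ᵐ x ∂σ, μ.rnDeriv σ x ≠ 0 → (γ.singularPart μ).rnDeriv σ x = 0 :=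
    ae_rnDeriv_ne_zero_imp hμ
      (Measure.rnDeriv_eq_zero_of_mutuallySingular (Measure.mutuallySingular_singularPart γ μ) hμ)
  filter_upwards [rnDeriv_eq_singularPart_add_mul γ μ σ hμ, hs, μ.rnDeriv_lt_top σ,
    (γ.singularPart μ).rnDeriv_lt_top σ] with x hγ hs hμ_top hs_top
  rcases eq_or_ne (μ.rnDeriv σ x) 0 with h | h
  · rw [hγ, h, mul_zero, add_zero, zero_mul, zero_add, ENNReal.toReal_zero, F.perspFn_zero_left,
      ENNReal.ofReal_toReal hs_top.ne, mul_comm]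
  · have h' : (μ.rnDeriv σ x).toReal ≠ 0 := ENNReal.toReal_ne_zero.2 ⟨h, hμ_top.ne⟩
    rw [hγ, hs h, zero_add, mul_zero, add_zero, F.perspFn_of_ne_zero h', ENNReal.toReal_mul,
      mul_div_cancel_right₀ _ h', ENNReal.ofReal_toReal hμ_top.ne]

theorem entF_eq_lintegral_perspFn {γ μ σ : Measure X} [SigmaFinite γ] [SigmaFinite μ]
    [SigmaFinite σ] (hγ : γ ≪ σ) (hμ : μ ≪ σ) :
    entF F γ μ = ∫⁻ x, perspFn F (μ.rnDeriv σ x).toReal (γ.rnDeriv σ x).toReal ∂σ := by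
  have hF : Measurable fun x => F.F (γ.rnDeriv μ x).toReal :=
    F.measurable_comp (Measure.measurable_rnDeriv γ μ).ennreal_toReal fun _ => ENNReal.toReal_nonneg
  have hmeas : Measurable fun x => μ.rnDeriv σ x * F.F (γ.rnDeriv μ x).toReal :=
    (Measure.measurable_rnDeriv μ σ).mul hF
  have hs : γ.singularPart μ ≪ σ :=
    (Measure.absolutelyContinuous_of_le (Measure.singularPart_le γ μ)).trans hγ
  rw [lintegral_congr_ae (perspFn_rnDeriv_ae_eq F γ μ σ hμ),
    lintegral_add_left hmeas,
    lintegral_rnDeriv_mul hμ hF.aemeasurable,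
    lintegral_const_mul _ (Measure.measurable_rnDeriv _ σ), Measure.lintegral_rnDeriv hs, entF]

theorem entF_add_le (γ γ' μ μ' : Measure X) [SigmaFinite γ] [SigmaFinite γ'] [SigmaFinite μ]
    [SigmaFinite μ'] : entF F (γ + γ') (μ + μ') ≤ entF F γ μ + entF F γ' μ' := by
  set σ := (γ + γ') + (μ + μ')
  have hγγ' : γ + γ' ≪ σ := Measure.absolutelyContinuous_of_le (Measure.le_add_right le_rfl)
  have hμμ' : μ + μ' ≪ σ := Measure.absolutelyContinuous_of_le (Measure.le_add_left le_rfl)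
  have hle {α β : Measure X} (h : α + β ≪ σ) : α ≪ σ ∧ β ≪ σ :=
    ⟨(Measure.absolutelyContinuous_of_le (Measure.le_add_right le_rfl)).trans h,
      (Measure.absolutelyContinuous_of_le (Measure.le_add_left le_rfl)).trans h⟩
  have hmeas (α : Measure X) : Measurable fun x => (α.rnDeriv σ x).toReal :=
    (Measure.measurable_rnDeriv α σ).ennreal_toReal
  rw [entF_eq_lintegral_perspFn F hγγ' hμμ', entF_eq_lintegral_perspFn F (hle hγγ').1 (hle hμμ').1,
    entF_eq_lintegral_perspFn F (hle hγγ').2 (hle hμμ').2,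
    ← lintegral_add_left (F.measurable_perspFn (hmeas μ) (fun _ => ENNReal.toReal_nonneg)
      (hmeas γ) fun _ => ENNReal.toReal_nonneg)]
  refine lintegral_mono_ae ?_
  filter_upwards [Measure.rnDeriv_add' γ γ' σ, Measure.rnDeriv_add' μ μ' σ, γ.rnDeriv_lt_top σ,
    γ'.rnDeriv_lt_top σ, μ.rnDeriv_lt_top σ, μ'.rnDeriv_lt_top σ] with x hγ hμ h₁ h₂ h₃ h₄
  rw [hγ, hμ, Pi.add_apply, Pi.add_apply, ENNReal.toReal_add h₁.ne h₂.ne,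
    ENNReal.toReal_add h₃.ne h₄.ne]
  exact F.perspFn_add_le ENNReal.toReal_nonneg ENNReal.toReal_nonneg ENNReal.toReal_nonneg
    ENNReal.toReal_nonneg

theorem entF_smul (c : ℝ≥0) (γ μ : Measure X) [IsFiniteMeasure γ] [SigmaFinite μ] :
    entF F (c • γ) (c • μ) = c * entF F γ μ := by
  rcases eq_or_ne c 0 with rfl | hc
  · simp [entF]
  have hF : ∫⁻ x, F.F ((c • γ).rnDeriv (c • μ) x).toReal ∂μ =
      ∫⁻ x, F.F (γ.rnDeriv μ x).toReal ∂μ :=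
    lintegral_congr_ae ((Measure.rnDeriv_smul_same γ μ hc).mono fun x hx => by simp only [hx])
  rw [entF, lintegral_smul_measure, hF, Measure.singularPart_smul_right _ _ _ hc,
    Measure.singularPart_smul, Measure.smul_apply, ENNReal.smul_def, smul_eq_mul,
    ENNReal.smul_def, smul_eq_mul, mul_left_comm, ← mul_add, entF]

theorem exists_mul_measure_univ_le_entF_add {a : ℝ≥0∞} (ha : a < F.recC ∨ a = 0) :
    ∃ M : ℝ≥0, ∀ γ μ : Measure X, SigmaFinite γ → SigmaFinite μ →
      a * γ univ ≤ entF F γ μ + M * μ univ := by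
  obtain ⟨M, hM⟩ := F.exists_mul_le_add ha
  refine ⟨M, fun γ μ _ _ => ?_⟩
  have hac : a * ∫⁻ x, γ.rnDeriv μ x ∂μ ≤ ∫⁻ x, F.F (γ.rnDeriv μ x).toReal ∂μ + M * μ univ := by
    rw [← lintegral_const_mul _ (Measure.measurable_rnDeriv γ μ), ← lintegral_const,
      ← lintegral_add_right _ measurable_const]
    refine lintegral_mono_ae ((γ.rnDeriv_lt_top μ).mono fun x hx => ?_)
    simpa only [ENNReal.ofReal_toReal hx.ne] using hM (γ.rnDeriv μ x).toReal
  calc a * γ univ = a * (γ.singularPart μ) univ + a * ∫⁻ x, γ.rnDeriv μ x ∂μ := by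
        conv_lhs => rw [Measure.haveLebesgueDecomposition_add γ μ]
        rw [Measure.add_apply, withDensity_apply _ .univ, setLIntegral_univ, mul_add]
    _ ≤ F.recC * (γ.singularPart μ) univ +
        (∫⁻ x, F.F (γ.rnDeriv μ x).toReal ∂μ + M * μ univ) := by
        gcongr
        exact ha.elim le_of_lt fun h => h ▸ zero_le
    _ = entF F γ μ + M * μ univ := by rw [entF]; ring

end Entropy

section Disintegration

open ProbabilityTheory

variable {X Y : Type*} [MeasurableSpace X] [MeasurableSpace Y]

theorem exists_measurable_eq_withDensity_add (μ ν : Measure X) [SigmaFinite μ] [SigmaFinite ν] :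
    ∃ b : X → ℝ, Measurable b ∧ (∀ x, b x ∈ Icc 0 1) ∧
      μ = (μ + ν).withDensity (fun x => ENNReal.ofReal (b x)) ∧
      ν = (μ + ν).withDensity (fun x => ENNReal.ofReal (1 - b x)) := by
  have hμ_ac : μ ≪ μ + ν := Measure.absolutelyContinuous_of_le (Measure.le_add_right le_rfl)
  have hν_ac : ν ≪ μ + ν := Measure.absolutelyContinuous_of_le (Measure.le_add_left le_rfl)
  have hadd : ∀ᵐ x ∂(μ + ν), μ.rnDeriv (μ + ν) x + ν.rnDeriv (μ + ν) x = 1 := by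
    filter_upwards [Measure.rnDeriv_add' μ ν (μ + ν), Measure.rnDeriv_self (μ + ν)] with x h h'
    rw [← Pi.add_apply, ← h, h']
  set b : X → ℝ := fun x => (min (μ.rnDeriv (μ + ν) x) 1).toReal
  have hb₀ : ∀ x, 0 ≤ b x := fun x => ENNReal.toReal_nonneg
  have hb : ∀ x, ENNReal.ofReal (b x) = min (μ.rnDeriv (μ + ν) x) 1 := fun x =>
    ENNReal.ofReal_toReal (ne_top_of_le_ne_top ENNReal.one_ne_top (min_le_right _ _))
  refine ⟨b, ((Measure.measurable_rnDeriv _ _).min measurable_const).ennreal_toReal, fun x =>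
    ⟨hb₀ x, ENNReal.toReal_le_of_le_ofReal zero_le_one (by simp)⟩, ?_, ?_⟩
  · conv_lhs => rw [← Measure.withDensity_rnDeriv_eq μ (μ + ν) hμ_ac]
    refine withDensity_congr_ae (hadd.mono fun x hx => ?_)
    simp only [hb, min_eq_left (le_self_add.trans hx.le)]
  · conv_lhs => rw [← Measure.withDensity_rnDeriv_eq ν (μ + ν) hν_ac]
    refine withDensity_congr_ae (hadd.mono fun x hx => ?_)
    have hx₁ : μ.rnDeriv (μ + ν) x ≤ 1 := le_self_add.trans hx.le
    beta_reduce
    rw [ENNReal.ofReal_sub 1 (hb₀ x), hb, min_eq_left hx₁, ENNReal.ofReal_one, ← hx,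
      ENNReal.add_sub_cancel_left (ne_top_of_le_ne_top ENNReal.one_ne_top hx₁)]

theorem withDensity_compProd_eq_compProd_withDensity (μ : Measure X) [SFinite μ] (κ : Kernel X Y)
    [IsSFiniteKernel κ] {f : X → ℝ≥0∞} (hf : Measurable f)
    [IsSFiniteKernel (κ.withDensity fun x _ => f x)] :
    μ.withDensity f ⊗ₘ κ = μ ⊗ₘ κ.withDensity fun x _ => f x := by
  ext s hs
  rw [Measure.compProd_apply hs, Measure.compProd_apply hs,
    lintegral_withDensity_eq_lintegral_mul _ hf (Kernel.measurable_kernel_prodMk_left hs)]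
  refine lintegral_congr fun x => ?_
  rw [Kernel.withDensity_apply _ (by fun_prop), withDensity_const, Pi.mul_apply,
    Measure.smul_apply, smul_eq_mul]

theorem measure_fst_smul (c : ℝ≥0) (γ : Measure (X × Y)) : (c • γ).fst = c • γ.fst :=
  Measure.map_smul (c : ℝ≥0∞) γ _

theorem measure_snd_smul (c : ℝ≥0) (γ : Measure (X × Y)) : (c • γ).snd = c • γ.snd :=
  Measure.map_smul (c : ℝ≥0∞) γ _

variable [StandardBorelSpace Y] [Nonempty Y]

theorem condKernel_smul_ae_eq (c : ℝ≥0) (γ : Measure (X × Y)) [IsFiniteMeasure γ] :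
    ∀ᵐ x ∂(c • γ).fst, (c • γ).condKernel x = γ.condKernel x := by
  have hcomp : c • γ = (c • γ).fst ⊗ₘ γ.condKernel := by
    rw [measure_fst_smul, ENNReal.smul_def c γ.fst, Measure.compProd_smul_left,
      Measure.disintegrate γ γ.condKernel, ENNReal.smul_def]
  filter_upwards [eq_condKernel_of_measure_eq_compProd _ hcomp] with x hx using hx.symm

theorem condKernel_add_ae_eq (γ γ' : Measure (X × Y)) [IsFiniteMeasure γ] [IsFiniteMeasure γ']
    {b : X → ℝ} (hb : Measurable b) (hb₁ : ∀ x, b x ∈ Icc 0 1)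
    (hγ : γ.fst = (γ + γ').fst.withDensity fun x => ENNReal.ofReal (b x))
    (hγ' : γ'.fst = (γ + γ').fst.withDensity fun x => ENNReal.ofReal (1 - b x)) :
    ∀ᵐ x ∂(γ + γ').fst, (γ + γ').condKernel x =
      ENNReal.ofReal (b x) • γ.condKernel x + ENNReal.ofReal (1 - b x) • γ'.condKernel x := by
  have hb' : Measurable fun x => 1 - b x := hb.const_sub 1
  let κ := γ.condKernel.withDensity fun x _ => ENNReal.ofReal (b x)
  let κ' := γ'.condKernel.withDensity fun x _ => ENNReal.ofReal (1 - b x)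
  have : IsFiniteKernel κ :=
    Kernel.isFiniteKernel_withDensity_of_bounded _ ENNReal.one_ne_top fun x _ =>
      ENNReal.ofReal_le_one.2 (hb₁ x).2
  have : IsFiniteKernel κ' :=
    Kernel.isFiniteKernel_withDensity_of_bounded _ ENNReal.one_ne_top fun x _ =>
      ENNReal.ofReal_le_one.2 (by linarith [(hb₁ x).1])
  have hcomp : γ + γ' = (γ + γ').fst ⊗ₘ (κ + κ') :=
    calc γ + γ' = γ.fst ⊗ₘ γ.condKernel + γ'.fst ⊗ₘ γ'.condKernel := by
          rw [Measure.disintegrate, Measure.disintegrate]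
      _ = (γ + γ').fst ⊗ₘ κ + (γ + γ').fst ⊗ₘ κ' := by
          rw [← withDensity_compProd_eq_compProd_withDensity _ _ hb.ennreal_ofReal,
            ← withDensity_compProd_eq_compProd_withDensity _ _ hb'.ennreal_ofReal, ← hγ, ← hγ']
      _ = (γ + γ').fst ⊗ₘ (κ + κ') := (Measure.compProd_add_right ..).symm
  filter_upwards [eq_condKernel_of_measure_eq_compProd _ hcomp] with x hx
  rw [← hx, add_apply, Kernel.withDensity_apply _ (by fun_prop),
    Kernel.withDensity_apply _ (by fun_prop), withDensity_const, withDensity_const]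

end Disintegration

section WeakTransport

variable {X Y : Type*} [MeasurableSpace X] [MeasurableSpace Y]

/-- Convexity of an extended-real functional on probability measures. Mixtures are compared as
measures since `ProbabilityMeasure Y` carries no convex structure. -/
def ConvexOnProb (f : ProbabilityMeasure Y → EReal) : Prop :=
  ∀ (p q m : ProbabilityMeasure Y) (t : ℝ), 0 ≤ t → t ≤ 1 →
    (m : Measure Y) =
      ENNReal.ofReal t • (p : Measure Y) + ENNReal.ofReal (1 - t) • (q : Measure Y) →
    f m ≤ (t : EReal) * f p + ((1 - t : ℝ) : EReal) * f q

theorem ConvexOnProb.add_const {f : ProbabilityMeasure Y → EReal} (hf : ConvexOnProb f) (k : ℝ) :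
    ConvexOnProb fun p => f p + (k : EReal) := by
  intro p q m t ht₀ ht₁ hm
  have hk : (k : EReal) = (t : EReal) * k + ((1 - t : ℝ) : EReal) * k := by
    exact_mod_cast (by ring : k = t * k + (1 - t) * k)
  have ht₀' : (0 : EReal) ≤ ((1 - t : ℝ) : EReal) := by exact_mod_cast sub_nonneg.2 ht₁
  calc f m + (k : EReal)
      ≤ (t : EReal) * f p + ((1 - t : ℝ) : EReal) * f q + k := by
        gcongr
        exact hf p q m t ht₀ ht₁ hm
    _ = (t : EReal) * f p + t * k + (((1 - t : ℝ) : EReal) * f q + ((1 - t : ℝ) : EReal) * k) := by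
        rw [add_add_add_comm, ← hk]
    _ = (t : EReal) * (f p + k) + ((1 - t : ℝ) : EReal) * (f q + k) := by
        rw [EReal.left_distrib_of_nonneg_of_ne_top (by exact_mod_cast ht₀) (EReal.coe_ne_top t),
          EReal.left_distrib_of_nonneg_of_ne_top ht₀' (EReal.coe_ne_top (1 - t))]

theorem ConvexOnProb.ennreal_le {f : ProbabilityMeasure Y → ℝ≥0∞}
    (hf : ConvexOnProb fun p => (f p : EReal)) {p q m : ProbabilityMeasure Y} {t : ℝ}
    (ht : t ∈ Icc 0 1) (hm : (m : Measure Y) =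
      ENNReal.ofReal t • (p : Measure Y) + ENNReal.ofReal (1 - t) • (q : Measure Y)) :
    f m ≤ ENNReal.ofReal t * f p + ENNReal.ofReal (1 - t) * f q := by
  have h := hf p q m t ht.1 ht.2 hm
  rw [← EReal.coe_ennreal_le_coe_ennreal_iff, EReal.coe_ennreal_add, EReal.coe_ennreal_mul,
    EReal.coe_ennreal_mul, EReal.coe_ennreal_ofReal, EReal.coe_ennreal_ofReal, max_eq_left ht.1,
    max_eq_left (sub_nonneg.2 ht.2)]
  exact h

theorem exists_le_add_and_lt_or_eq_zero {k r₁ r₂ : ℝ≥0∞} (h : k < r₁ + r₂) :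
    ∃ a₁ a₂, k ≤ a₁ + a₂ ∧ (a₁ < r₁ ∨ a₁ = 0) ∧ (a₂ < r₂ ∨ a₂ = 0) := by
  rcases eq_or_ne r₁ 0 with rfl | h₁
  · exact ⟨0, k, by rw [zero_add], Or.inr rfl, Or.inl (by rwa [zero_add] at h)⟩
  rcases eq_or_ne r₂ 0 with rfl | h₂
  · exact ⟨k, 0, by rw [add_zero], Or.inl (by rwa [add_zero] at h), Or.inr rfl⟩
  obtain ⟨a₁, ha₁, a₂, ha₂, hk⟩ := ENNReal.exists_lt_add_of_lt_add h h₁ h₂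
  exact ⟨a₁, a₂, hk.le, Or.inl ha₁, Or.inl ha₂⟩

variable [StandardBorelSpace Y] [Nonempty Y]

theorem measurable_condKernel_cost {E : Type*} [MeasurableSpace E]
    {c : X → ProbabilityMeasure Y → E}
    (hc : Measurable fun q : X × ProbabilityMeasure Y => c q.1 q.2)
    (γ : Measure (X × Y)) [IsFiniteMeasure γ] :
    Measurable fun x => c x ⟨γ.condKernel x, inferInstance⟩ :=
  hc.comp (measurable_id.prodMk γ.condKernel.measurable.subtype_mk)

/-- The weak transport cost `∫ c(x, γ_x) dγ₁(x)` for a cost with values in `[0,∞]`. -/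
def weakTransportCost (c : X → ProbabilityMeasure Y → ℝ≥0∞) (γ : Measure (X × Y))
    [IsFiniteMeasure γ] : ℝ≥0∞ :=
  ∫⁻ x, c x ⟨γ.condKernel x, inferInstance⟩ ∂γ.fst

theorem weakTransportCost_smul (c : X → ProbabilityMeasure Y → ℝ≥0∞) (r : ℝ≥0)
    (γ : Measure (X × Y)) [IsFiniteMeasure γ] :
    weakTransportCost c (r • γ) = r * weakTransportCost c γ := by
  calc weakTransportCost c (r • γ)
      = ∫⁻ x, c x ⟨γ.condKernel x, inferInstance⟩ ∂(r • γ).fst := by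
        refine lintegral_congr_ae ((condKernel_smul_ae_eq r γ).mono fun x hx => ?_)
        simp only [hx]
    _ = r * weakTransportCost c γ := by
        rw [measure_fst_smul, lintegral_smul_measure, weakTransportCost,
          ENNReal.smul_def, smul_eq_mul]

theorem weakTransportCost_eq_lintegral_mul {c : X → ProbabilityMeasure Y → ℝ≥0∞}
    (hc : Measurable fun q : X × ProbabilityMeasure Y => c q.1 q.2) {γ : Measure (X × Y)}
    [IsFiniteMeasure γ] {ν : Measure X} {f : X → ℝ≥0∞} (hf : Measurable f)
    (hγ : γ.fst = ν.withDensity f) :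
    weakTransportCost c γ = ∫⁻ x, f x * c x ⟨γ.condKernel x, inferInstance⟩ ∂ν := by
  rw [weakTransportCost, hγ,
    lintegral_withDensity_eq_lintegral_mul _ hf (measurable_condKernel_cost hc γ)]
  rfl

theorem weakTransportCost_add_le {c : X → ProbabilityMeasure Y → ℝ≥0∞}
    (hc : Measurable fun q : X × ProbabilityMeasure Y => c q.1 q.2)
    (hconv : ∀ x, ConvexOnProb fun p => (c x p : EReal)) (γ γ' : Measure (X × Y))
    [IsFiniteMeasure γ] [IsFiniteMeasure γ'] :
    weakTransportCost c (γ + γ') ≤ weakTransportCost c γ + weakTransportCost c γ' := by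
  obtain ⟨b, hb, hb₁, hγ, hγ'⟩ := exists_measurable_eq_withDensity_add γ.fst γ'.fst
  rw [← Measure.fst_add] at hγ hγ'
  calc weakTransportCost c (γ + γ')
      ≤ ∫⁻ x, (ENNReal.ofReal (b x) * c x ⟨γ.condKernel x, inferInstance⟩ +
          ENNReal.ofReal (1 - b x) * c x ⟨γ'.condKernel x, inferInstance⟩) ∂(γ + γ').fst :=
        lintegral_mono_ae ((condKernel_add_ae_eq γ γ' hb hb₁ hγ hγ').mono fun x hx =>
          (hconv x).ennreal_le (hb₁ x) hx)
    _ = ∫⁻ x, ENNReal.ofReal (b x) * c x ⟨γ.condKernel x, inferInstance⟩ ∂(γ + γ').fst +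
          ∫⁻ x, ENNReal.ofReal (1 - b x) * c x ⟨γ'.condKernel x, inferInstance⟩ ∂(γ + γ').fst :=
        lintegral_add_left (hb.ennreal_ofReal.mul (measurable_condKernel_cost hc γ)) _
    _ = weakTransportCost c γ + weakTransportCost c γ' := by
        rw [weakTransportCost_eq_lintegral_mul hc hb.ennreal_ofReal hγ,
          weakTransportCost_eq_lintegral_mul hc (hb.const_sub 1).ennreal_ofReal hγ']

/-- The functional `ℰ_c(γ|μ₁,μ₂)` for a cost with values in `[0,∞]`. -/
def entropyTransportCost (c : X → ProbabilityMeasure Y → ℝ≥0∞) (F₁ F₂ : EntropyFn)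
    (μ₁ : Measure X) (μ₂ : Measure Y) (γ : Measure (X × Y)) [IsFiniteMeasure γ] : ℝ≥0∞ :=
  entF F₁ γ.fst μ₁ + entF F₂ γ.snd μ₂ + weakTransportCost c γ

theorem entropyTransportCost_smul (c : X → ProbabilityMeasure Y → ℝ≥0∞) (F₁ F₂ : EntropyFn)
    (r : ℝ≥0) (μ₁ : Measure X) (μ₂ : Measure Y) [SigmaFinite μ₁] [SigmaFinite μ₂]
    (γ : Measure (X × Y)) [IsFiniteMeasure γ] :
    entropyTransportCost c F₁ F₂ (r • μ₁) (r • μ₂) (r • γ) =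
      r * entropyTransportCost c F₁ F₂ μ₁ μ₂ γ := by
  rw [entropyTransportCost, measure_fst_smul, measure_snd_smul, entF_smul, entF_smul,
    weakTransportCost_smul, ← mul_add, ← mul_add, entropyTransportCost]

theorem entropyTransportCost_add_le {c : X → ProbabilityMeasure Y → ℝ≥0∞}
    (hc : Measurable fun q : X × ProbabilityMeasure Y => c q.1 q.2)
    (hconv : ∀ x, ConvexOnProb fun p => (c x p : EReal)) (F₁ F₂ : EntropyFn)
    (μ₁ μ₁' : Measure X) (μ₂ μ₂' : Measure Y) [SigmaFinite μ₁] [SigmaFinite μ₁']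
    [SigmaFinite μ₂] [SigmaFinite μ₂'] (γ γ' : Measure (X × Y)) [IsFiniteMeasure γ]
    [IsFiniteMeasure γ'] :
    entropyTransportCost c F₁ F₂ (μ₁ + μ₁') (μ₂ + μ₂') (γ + γ') ≤
      entropyTransportCost c F₁ F₂ μ₁ μ₂ γ + entropyTransportCost c F₁ F₂ μ₁' μ₂' γ' := by
  calc entropyTransportCost c F₁ F₂ (μ₁ + μ₁') (μ₂ + μ₂') (γ + γ')
      ≤ (entF F₁ γ.fst μ₁ + entF F₁ γ'.fst μ₁') + (entF F₂ γ.snd μ₂ + entF F₂ γ'.snd μ₂') +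
          (weakTransportCost c γ + weakTransportCost c γ') := by
        rw [entropyTransportCost, Measure.fst_add, Measure.snd_add]
        gcongr
        exacts [entF_add_le F₁ .., entF_add_le F₂ .., weakTransportCost_add_le hc hconv γ γ']
    _ = entropyTransportCost c F₁ F₂ μ₁ μ₂ γ + entropyTransportCost c F₁ F₂ μ₁' μ₂' γ' := by
        rw [entropyTransportCost, entropyTransportCost]; ring

theorem exists_mul_measure_univ_le_entropyTransportCost_add (F₁ F₂ : EntropyFn) {k : ℝ≥0∞}
    (hk : k < F₁.recC + F₂.recC) :
    ∃ M₁ M₂ : ℝ≥0, ∀ (c : X → ProbabilityMeasure Y → ℝ≥0∞) (μ₁ : Measure X) (μ₂ : Measure Y)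
      (γ : Measure (X × Y)) (_ : SigmaFinite μ₁) (_ : SigmaFinite μ₂) (_ : IsFiniteMeasure γ),
      k * γ univ ≤ entropyTransportCost c F₁ F₂ μ₁ μ₂ γ + (M₁ * μ₁ univ + M₂ * μ₂ univ) := by
  obtain ⟨a₁, a₂, hle, ha₁, ha₂⟩ := exists_le_add_and_lt_or_eq_zero hk
  obtain ⟨M₁, hM₁⟩ := exists_mul_measure_univ_le_entF_add (X := X) F₁ ha₁
  obtain ⟨M₂, hM₂⟩ := exists_mul_measure_univ_le_entF_add (X := Y) F₂ ha₂
  refine ⟨M₁, M₂, fun c μ₁ μ₂ γ _ _ _ => ?_⟩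
  calc k * γ univ ≤ a₁ * γ.fst univ + a₂ * γ.snd univ := by
        rw [Measure.fst_univ, Measure.snd_univ, ← add_mul]
        gcongr
    _ ≤ (entF F₁ γ.fst μ₁ + M₁ * μ₁ univ) + (entF F₂ γ.snd μ₂ + M₂ * μ₂ univ) :=
        add_le_add (hM₁ _ _ inferInstance inferInstance) (hM₂ _ _ inferInstance inferInstance)
    _ = entF F₁ γ.fst μ₁ + entF F₂ γ.snd μ₂ + (M₁ * μ₁ univ + M₂ * μ₂ univ) :=
        add_add_add_comm ..
    _ ≤ entropyTransportCost c F₁ F₂ μ₁ μ₂ γ + (M₁ * μ₁ univ + M₂ * μ₂ univ) := by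
        gcongr
        exact le_self_add

end WeakTransport

section NegativePart

theorem coe_ennreal_sub_eq_coe_ennreal_sub {a b c d : ℝ≥0∞} (hb : b ≠ ∞) (hd : d ≠ ∞)
    (h : a + d = c + b) : (a : EReal) - b = c - d := by
  lift b to ℝ≥0 using hb
  lift d to ℝ≥0 using hd
  have h' : (a : EReal) + (d : ℝ) = c + (b : ℝ) := by
    simpa only [EReal.coe_ennreal_add, EReal.coe_nnreal_eq_coe_real]
      using congrArg ENNReal.toEReal h
  calc (a : EReal) - (b : ℝ) = a + (d : ℝ) - (d : ℝ) - (b : ℝ) := by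
        rw [EReal.add_sub_cancel_right]
    _ = c + (b : ℝ) - (b : ℝ) - (d : ℝ) := by
        rw [h', sub_eq_add_neg, sub_eq_add_neg, add_right_comm, ← sub_eq_add_neg,
          ← sub_eq_add_neg]
    _ = c - (d : ℝ) := by rw [EReal.add_sub_cancel_right]

theorem neg_coe_ennreal_le_sub {a b c : ℝ≥0∞} (hb : b ≠ ∞) (h : b ≤ a + c) :
    -(c : EReal) ≤ a - b := by
  rw [EReal.le_sub_iff_add_le (by simp) (by simp [hb]), add_comm, ← sub_eq_add_neg]
  exact EReal.sub_le_of_le_add (by exact_mod_cast h)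

theorem posE_add_coe_eq {a : EReal} {k : ℝ≥0} (ha : ((-k : ℝ) : EReal) ≤ a) :
    posE a + k = (a + (k : ℝ)).toENNReal + posE (-a) := by
  induction a with
  | bot => simp at ha
  | top => simp [posE]
  | coe r =>
    have hr : 0 ≤ r + k := by linarith [EReal.coe_le_coe_iff.1 ha]
    suffices ENNReal.ofReal r + k = ENNReal.ofReal (r + k) + ENNReal.ofReal (-r) by
      simpa [posE, ← EReal.coe_add, ← EReal.coe_neg] using this
    rcases le_total 0 r with h | h
    · rw [ENNReal.ofReal_add h k.coe_nonneg, ENNReal.ofReal_coe_nnreal,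
        ENNReal.ofReal_of_nonpos (neg_nonpos.2 h), add_zero]
    · rw [ENNReal.ofReal_of_nonpos h, ← ENNReal.ofReal_add hr (neg_nonneg.2 h), zero_add,
        add_neg_cancel_comm, ENNReal.ofReal_coe_nnreal]

theorem posE_neg_le {a : EReal} {k : ℝ≥0} (ha : ((-k : ℝ) : EReal) ≤ a) : posE (-a) ≤ k := by
  have h : (-a).toENNReal ≤ ((k : ℝ) : EReal).toENNReal :=
    EReal.toENNReal_le_toENNReal (EReal.neg_le.1 (by exact_mod_cast ha))
  rwa [EReal.real_coe_toENNReal, ENNReal.ofReal_coe_nnreal] at h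

theorem eIntegral_eq_lintegral_sub {α : Type*} [MeasurableSpace α] (μ : Measure α)
    [IsFiniteMeasure μ] {f : α → EReal} (hf : Measurable f) {k : ℝ≥0}
    (hk : ∀ x, ((-k : ℝ) : EReal) ≤ f x) :
    eIntegral μ f =
      ((∫⁻ x, (f x + (k : ℝ)).toENNReal ∂μ : ℝ≥0∞) : EReal) - ((k * μ univ : ℝ≥0∞) : EReal) := by
  have hneg : ∫⁻ x, posE (-f x) ∂μ ≤ k * μ univ := by
    rw [← lintegral_const]
    exact lintegral_mono fun x => posE_neg_le (hk x)
  have hkμ : k * μ univ ≠ ∞ := ENNReal.mul_ne_top ENNReal.coe_ne_top (measure_ne_top μ univ)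
  refine coe_ennreal_sub_eq_coe_ennreal_sub (ne_top_of_le_ne_top hkμ hneg) hkμ ?_
  rw [← lintegral_const, ← lintegral_add_right _ measurable_const,
    ← lintegral_add_right _ (show Measurable fun x => posE (-f x) from hf.neg.ereal_toENNReal)]
  exact lintegral_congr fun x => posE_add_coe_eq (hk x)

end NegativePart

section WeakEntropyTransport

variable {X Y : Type*} [MeasurableSpace Y] {C : X → ProbabilityMeasure Y → EReal} {k : ℝ≥0}

/-- The cost `C + k` as a function with values in `[0,∞]`, meant for `C ≥ -k`: smaller values of
`C` are truncated. -/
def shiftedCost (C : X → ProbabilityMeasure Y → EReal) (k : ℝ≥0) (x : X)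
    (p : ProbabilityMeasure Y) : ℝ≥0∞ :=
  (C x p + (k : ℝ)).toENNReal

theorem convexOnProb_shiftedCost (hk : ∀ x p, ((-k : ℝ) : EReal) ≤ C x p)
    (hconv : ∀ x, ConvexOnProb (C x)) (x : X) :
    ConvexOnProb fun p => (shiftedCost C k x p : EReal) := by
  have hnonneg (p) : 0 ≤ C x p + (k : ℝ) := by
    calc (0 : EReal) = ((-k : ℝ) : EReal) + (k : ℝ) := by exact_mod_cast (neg_add_cancel _).symm
      _ ≤ C x p + (k : ℝ) := by gcongr; exact hk x p
  simpa only [shiftedCost, EReal.coe_toENNReal (hnonneg _)] using (hconv x).add_const k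

variable [MeasurableSpace X]

theorem measurable_shiftedCost (hC : Measurable fun q : X × ProbabilityMeasure Y => C q.1 q.2)
    (k : ℝ≥0) : Measurable fun q : X × ProbabilityMeasure Y => shiftedCost C k q.1 q.2 :=
  (hC.add_const ((k : ℝ) : EReal)).ereal_toENNReal

variable [StandardBorelSpace Y] [Nonempty Y]

theorem wCost_eq_entropyTransportCost_sub
    (hC : Measurable fun q : X × ProbabilityMeasure Y => C q.1 q.2)
    (hk : ∀ x p, ((-k : ℝ) : EReal) ≤ C x p) (F₁ F₂ : EntropyFn) (μ₁ : Measure X)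
    (μ₂ : Measure Y) (γ : Measure (X × Y)) [hγ : IsFiniteMeasure γ] :
    wCost C F₁ F₂ μ₁ μ₂ γ hγ =
      (entropyTransportCost (shiftedCost C k) F₁ F₂ μ₁ μ₂ γ : EReal) -
        ((k * γ univ : ℝ≥0∞) : EReal) := by
  rw [wCost, eIntegral_eq_lintegral_sub γ.fst (measurable_condKernel_cost hC γ) fun _ => hk _ _,
    Measure.fst_univ, sub_eq_add_neg, ← add_assoc, ← EReal.coe_ennreal_add,
    ← EReal.coe_ennreal_add, ← sub_eq_add_neg]
  rfl

theorem wCost_smul (hC : Measurable fun q : X × ProbabilityMeasure Y => C q.1 q.2)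
    (hk : ∀ x p, ((-k : ℝ) : EReal) ≤ C x p) (F₁ F₂ : EntropyFn) (r : ℝ≥0)
    (μ₁ : Measure X) (μ₂ : Measure Y) [SigmaFinite μ₁] [SigmaFinite μ₂]
    (γ : Measure (X × Y)) [hγ : IsFiniteMeasure γ] :
    wCost C F₁ F₂ (r • μ₁) (r • μ₂) (r • γ) inferInstance =
      ((r : ℝ) : EReal) * wCost C F₁ F₂ μ₁ μ₂ γ hγ := by
  have hmass : k * (r • γ) univ = r * (k * γ univ) := by
    rw [Measure.smul_apply, ENNReal.smul_def, smul_eq_mul, mul_left_comm]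
  rw [wCost_eq_entropyTransportCost_sub hC hk, wCost_eq_entropyTransportCost_sub hC hk,
    entropyTransportCost_smul, hmass, EReal.coe_ennreal_mul, EReal.coe_ennreal_mul,
    EReal.coe_nnreal_eq_coe_real, sub_eq_add_neg, sub_eq_add_neg,
    EReal.left_distrib_of_nonneg_of_ne_top (by exact_mod_cast r.2) (EReal.coe_ne_top _), mul_neg]

theorem wCost_add_le (hC : Measurable fun q : X × ProbabilityMeasure Y => C q.1 q.2)
    (hk : ∀ x p, ((-k : ℝ) : EReal) ≤ C x p) (hconv : ∀ x, ConvexOnProb (C x))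
    (F₁ F₂ : EntropyFn) (μ₁ μ₁' : Measure X) (μ₂ μ₂' : Measure Y) [SigmaFinite μ₁]
    [SigmaFinite μ₁'] [SigmaFinite μ₂] [SigmaFinite μ₂'] (γ γ' : Measure (X × Y))
    [hγ : IsFiniteMeasure γ] [hγ' : IsFiniteMeasure γ'] :
    wCost C F₁ F₂ (μ₁ + μ₁') (μ₂ + μ₂') (γ + γ') inferInstance ≤
      wCost C F₁ F₂ μ₁ μ₂ γ hγ + wCost C F₁ F₂ μ₁' μ₂' γ' hγ' := by
  have hmass : -((k * (γ + γ') univ : ℝ≥0∞) : EReal) =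
      -((k * γ univ : ℝ≥0∞) : EReal) + -((k * γ' univ : ℝ≥0∞) : EReal) := by
    rw [Measure.add_apply, mul_add, EReal.coe_ennreal_add,
      EReal.neg_add (.inl (EReal.coe_ennreal_ne_bot _)) (.inr (EReal.coe_ennreal_ne_bot _)),
      sub_eq_add_neg]
  simp only [wCost_eq_entropyTransportCost_sub hC hk, sub_eq_add_neg]
  rw [hmass, add_add_add_comm, ← EReal.coe_ennreal_add]
  gcongr
  rw [EReal.coe_ennreal_le_coe_ennreal_iff]
  exact entropyTransportCost_add_le (measurable_shiftedCost hC k)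
    (convexOnProb_shiftedCost hk hconv) F₁ F₂ μ₁ μ₁' μ₂ μ₂' γ γ'

theorem wOpt_smul_le (hC : Measurable fun q : X × ProbabilityMeasure Y => C q.1 q.2)
    (hk : ∀ x p, ((-k : ℝ) : EReal) ≤ C x p) (F₁ F₂ : EntropyFn) {r : ℝ≥0} (hr : 0 < r)
    (μ₁ : Measure X) (μ₂ : Measure Y) [SigmaFinite μ₁] [SigmaFinite μ₂] :
    wOpt C F₁ F₂ (r • μ₁) (r • μ₂) ≤ ((r : ℝ) : EReal) * wOpt C F₁ F₂ μ₁ μ₂ := by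
  have hr' : (0 : EReal) < ((r : ℝ) : EReal) := by exact_mod_cast hr
  rw [← EReal.div_le_iff_le_mul hr' (EReal.coe_ne_top _)]
  refine le_sInf ?_
  rintro _ ⟨γ, hγ, rfl⟩
  rw [EReal.div_le_iff_le_mul hr' (EReal.coe_ne_top _), ← wCost_smul hC hk]
  exact sInf_le ⟨r • γ, inferInstance, rfl⟩

theorem exists_neg_le_wOpt (hC : Measurable fun q : X × ProbabilityMeasure Y => C q.1 q.2)
    (hk : ∀ x p, ((-k : ℝ) : EReal) ≤ C x p) {F₁ F₂ : EntropyFn}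
    (hF : (k : ℝ≥0∞) < F₁.recC + F₂.recC) :
    ∃ M₁ M₂ : ℝ≥0, ∀ (μ₁ : Measure X) (μ₂ : Measure Y), SigmaFinite μ₁ → SigmaFinite μ₂ →
      -((M₁ * μ₁ univ + M₂ * μ₂ univ : ℝ≥0∞) : EReal) ≤ wOpt C F₁ F₂ μ₁ μ₂ := by
  obtain ⟨M₁, M₂, hM⟩ :=
    exists_mul_measure_univ_le_entropyTransportCost_add (X := X) (Y := Y) F₁ F₂ hF
  refine ⟨M₁, M₂, fun μ₁ μ₂ h₁ h₂ => le_sInf ?_⟩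
  rintro _ ⟨γ, hγ, rfl⟩
  rw [wCost_eq_entropyTransportCost_sub hC hk]
  exact neg_coe_ennreal_le_sub (ENNReal.mul_ne_top ENNReal.coe_ne_top (measure_ne_top γ univ))
    (hM _ μ₁ μ₂ γ h₁ h₂ hγ)

theorem wOpt_ne_bot (hC : Measurable fun q : X × ProbabilityMeasure Y => C q.1 q.2)
    (hk : ∀ x p, ((-k : ℝ) : EReal) ≤ C x p) {F₁ F₂ : EntropyFn}
    (hF : (k : ℝ≥0∞) < F₁.recC + F₂.recC) (μ₁ : Measure X) (μ₂ : Measure Y)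
    [IsFiniteMeasure μ₁] [IsFiniteMeasure μ₂] : wOpt C F₁ F₂ μ₁ μ₂ ≠ ⊥ := by
  obtain ⟨M₁, M₂, hM⟩ := exists_neg_le_wOpt hC hk hF
  refine ne_bot_of_le_ne_bot ?_ (hM μ₁ μ₂ inferInstance inferInstance)
  rw [Ne, EReal.neg_eq_bot_iff, EReal.coe_ennreal_eq_top_iff]
  finiteness

theorem wOpt_zero (hC : Measurable fun q : X × ProbabilityMeasure Y => C q.1 q.2)
    (hk : ∀ x p, ((-k : ℝ) : EReal) ≤ C x p) {F₁ F₂ : EntropyFn}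
    (hF : (k : ℝ≥0∞) < F₁.recC + F₂.recC) : wOpt C F₁ F₂ 0 0 = 0 := by
  obtain ⟨M₁, M₂, hM⟩ := exists_neg_le_wOpt hC hk hF
  refine le_antisymm (sInf_le ⟨0, inferInstance, ?_⟩) ?_
  · simp [wCost, entF, eIntegral]
  · simpa using hM 0 0 inferInstance inferInstance

theorem wOpt_add_le (hC : Measurable fun q : X × ProbabilityMeasure Y => C q.1 q.2)
    (hk : ∀ x p, ((-k : ℝ) : EReal) ≤ C x p) (hconv : ∀ x, ConvexOnProb (C x))
    {F₁ F₂ : EntropyFn} (hF : (k : ℝ≥0∞) < F₁.recC + F₂.recC) (μ₁ μ₁' : Measure X)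
    (μ₂ μ₂' : Measure Y) [IsFiniteMeasure μ₁] [IsFiniteMeasure μ₁'] [IsFiniteMeasure μ₂]
    [IsFiniteMeasure μ₂'] :
    wOpt C F₁ F₂ (μ₁ + μ₁') (μ₂ + μ₂') ≤ wOpt C F₁ F₂ μ₁ μ₂ + wOpt C F₁ F₂ μ₁' μ₂' := by
  refine EReal.le_add_of_forall_gt (Or.inl (wOpt_ne_bot hC hk hF μ₁ μ₂))
    (Or.inr (wOpt_ne_bot hC hk hF μ₁' μ₂')) fun a ha a' ha' => ?_
  obtain ⟨_, ⟨γ, hγ, rfl⟩, hlt⟩ := sInf_lt_iff.1 ha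
  obtain ⟨_, ⟨γ', hγ', rfl⟩, hlt'⟩ := sInf_lt_iff.1 ha'
  calc wOpt C F₁ F₂ (μ₁ + μ₁') (μ₂ + μ₂')
      ≤ wCost C F₁ F₂ (μ₁ + μ₁') (μ₂ + μ₂') (γ + γ') inferInstance :=
        sInf_le ⟨γ + γ', inferInstance, rfl⟩
    _ ≤ wCost C F₁ F₂ μ₁ μ₂ γ hγ + wCost C F₁ F₂ μ₁' μ₂' γ' hγ' :=
        wCost_add_le hC hk hconv F₁ F₂ μ₁ μ₁' μ₂ μ₂' γ γ'
    _ ≤ a + a' := add_le_add hlt.le hlt'.le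

theorem ETsgn_toSignedMeasure (C : X → ProbabilityMeasure Y → EReal) (F₁ F₂ : EntropyFn)
    (μ₁ : Measure X) (μ₂ : Measure Y) [h₁ : IsFiniteMeasure μ₁] [h₂ : IsFiniteMeasure μ₂] :
    ETsgn C F₁ F₂ μ₁.toSignedMeasure μ₂.toSignedMeasure = wOpt C F₁ F₂ μ₁ μ₂ := by
  refine le_antisymm (sInf_le ⟨μ₁, h₁, μ₂, h₂, rfl, rfl, rfl⟩) (le_sInf ?_)
  rintro _ ⟨m₁, _, m₂, _, e₁, e₂, rfl⟩
  rw [Measure.toSignedMeasure_eq_toSignedMeasure_iff] at e₁ e₂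
  rw [e₁, e₂]

theorem ETsgn_eq_top_or_exists_toSignedMeasure (C : X → ProbabilityMeasure Y → EReal)
    (F₁ F₂ : EntropyFn) (ν₁ : SignedMeasure X) (ν₂ : SignedMeasure Y) :
    ETsgn C F₁ F₂ ν₁ ν₂ = ⊤ ∨ ∃ (μ₁ : Measure X) (_ : IsFiniteMeasure μ₁) (μ₂ : Measure Y)
      (_ : IsFiniteMeasure μ₂), ν₁ = μ₁.toSignedMeasure ∧ ν₂ = μ₂.toSignedMeasure := by
  rw [or_iff_not_imp_left]
  intro h
  obtain ⟨_, ⟨μ₁, h₁, μ₂, h₂, e₁, e₂, -⟩, -⟩ := sInf_lt_iff.1 (Ne.lt_top h)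
  exact ⟨μ₁, h₁, μ₂, h₂, e₁, e₂⟩

theorem ETsgn_ne_bot (hC : Measurable fun q : X × ProbabilityMeasure Y => C q.1 q.2)
    (hk : ∀ x p, ((-k : ℝ) : EReal) ≤ C x p) {F₁ F₂ : EntropyFn}
    (hF : (k : ℝ≥0∞) < F₁.recC + F₂.recC) (ν₁ : SignedMeasure X) (ν₂ : SignedMeasure Y) :
    ETsgn C F₁ F₂ ν₁ ν₂ ≠ ⊥ := by
  rcases ETsgn_eq_top_or_exists_toSignedMeasure C F₁ F₂ ν₁ ν₂ with h | ⟨μ₁, _, μ₂, _, rfl, rfl⟩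
  · exact h ▸ top_ne_bot
  · rw [ETsgn_toSignedMeasure]
    exact wOpt_ne_bot hC hk hF μ₁ μ₂

theorem ETsgn_smul_le (hC : Measurable fun q : X × ProbabilityMeasure Y => C q.1 q.2)
    (hk : ∀ x p, ((-k : ℝ) : EReal) ≤ C x p) (F₁ F₂ : EntropyFn) {l : ℝ} (hl : 0 < l)
    (ν₁ : SignedMeasure X) (ν₂ : SignedMeasure Y) :
    ETsgn C F₁ F₂ (l • ν₁) (l • ν₂) ≤ (l : EReal) * ETsgn C F₁ F₂ ν₁ ν₂ := by
  rcases ETsgn_eq_top_or_exists_toSignedMeasure C F₁ F₂ ν₁ ν₂ with h | ⟨μ₁, _, μ₂, _, rfl, rfl⟩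
  · rw [h, EReal.coe_mul_top_of_pos hl]
    exact le_top
  lift l to ℝ≥0 using hl.le
  change ETsgn C F₁ F₂ (l • μ₁.toSignedMeasure) (l • μ₂.toSignedMeasure) ≤ _
  rw [← Measure.toSignedMeasure_smul, ← Measure.toSignedMeasure_smul, ETsgn_toSignedMeasure,
    ETsgn_toSignedMeasure]
  exact wOpt_smul_le hC hk F₁ F₂ (by exact_mod_cast hl) μ₁ μ₂

theorem ETsgn_smul (hC : Measurable fun q : X × ProbabilityMeasure Y => C q.1 q.2)
    (hk : ∀ x p, ((-k : ℝ) : EReal) ≤ C x p) {F₁ F₂ : EntropyFn}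
    (hF : (k : ℝ≥0∞) < F₁.recC + F₂.recC) {l : ℝ} (hl : 0 ≤ l)
    (ν₁ : SignedMeasure X) (ν₂ : SignedMeasure Y) :
    ETsgn C F₁ F₂ (l • ν₁) (l • ν₂) = (l : EReal) * ETsgn C F₁ F₂ ν₁ ν₂ := by
  rcases hl.eq_or_lt with rfl | hl
  · rw [zero_smul, zero_smul, EReal.coe_zero, zero_mul, ← Measure.toSignedMeasure_zero,
      ← Measure.toSignedMeasure_zero, ETsgn_toSignedMeasure, wOpt_zero hC hk hF]
  refine le_antisymm (ETsgn_smul_le hC hk F₁ F₂ hl ν₁ ν₂) ?_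
  have hinv := ETsgn_smul_le hC hk F₁ F₂ (inv_pos.2 hl) (l • ν₁) (l • ν₂)
  rw [inv_smul_smul₀ hl.ne', inv_smul_smul₀ hl.ne'] at hinv
  calc (l : EReal) * ETsgn C F₁ F₂ ν₁ ν₂
      ≤ (l : EReal) * (((l⁻¹ : ℝ) : EReal) * ETsgn C F₁ F₂ (l • ν₁) (l • ν₂)) :=
        mul_le_mul_of_nonneg_left hinv (by exact_mod_cast hl.le)
    _ = ETsgn C F₁ F₂ (l • ν₁) (l • ν₂) := by
        rw [← mul_assoc, ← EReal.coe_mul, mul_inv_cancel₀ hl.ne', EReal.coe_one, one_mul]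

theorem ETsgn_add_le (hC : Measurable fun q : X × ProbabilityMeasure Y => C q.1 q.2)
    (hk : ∀ x p, ((-k : ℝ) : EReal) ≤ C x p) (hconv : ∀ x, ConvexOnProb (C x))
    {F₁ F₂ : EntropyFn} (hF : (k : ℝ≥0∞) < F₁.recC + F₂.recC)
    (ν₁ ν₁' : SignedMeasure X) (ν₂ ν₂' : SignedMeasure Y) :
    ETsgn C F₁ F₂ (ν₁ + ν₁') (ν₂ + ν₂') ≤ ETsgn C F₁ F₂ ν₁ ν₂ + ETsgn C F₁ F₂ ν₁' ν₂' := by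
  rcases ETsgn_eq_top_or_exists_toSignedMeasure C F₁ F₂ ν₁ ν₂ with h | ⟨μ₁, _, μ₂, _, rfl, rfl⟩
  · rw [h, EReal.top_add_of_ne_bot (ETsgn_ne_bot hC hk hF ν₁' ν₂')]
    exact le_top
  rcases ETsgn_eq_top_or_exists_toSignedMeasure C F₁ F₂ ν₁' ν₂' with
    h | ⟨μ₁', _, μ₂', _, rfl, rfl⟩
  · rw [h, EReal.add_top_of_ne_bot (ETsgn_ne_bot hC hk hF _ _)]
    exact le_top
  simp only [← Measure.toSignedMeasure_add, ETsgn_toSignedMeasure]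
  exact wOpt_add_le hC hk hconv hF μ₁ μ₁' μ₂ μ₂'

end WeakEntropyTransport

theorem stmt11_general {X₁ X₂ : Type*} [MeasurableSpace X₁] [MeasurableSpace X₂]
    [StandardBorelSpace X₂] [Nonempty X₂] {C : X₁ → ProbabilityMeasure X₂ → EReal}
    (hC : Measurable fun q : X₁ × ProbabilityMeasure X₂ => C q.1 q.2) {K : ℝ}
    (hK : ∀ x p, (K : EReal) ≤ C x p) (hconv : ∀ x, ConvexOnProb (C x))
    {F₁ F₂ : EntropyFn} (hF : ENNReal.ofReal (-K) < F₁.recC + F₂.recC) :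
    (∀ (ν₁ : SignedMeasure X₁) (ν₂ : SignedMeasure X₂), ETsgn C F₁ F₂ ν₁ ν₂ ≠ ⊥) ∧
    (∀ (l : ℝ), 0 ≤ l → ∀ (ν₁ : SignedMeasure X₁) (ν₂ : SignedMeasure X₂),
        ETsgn C F₁ F₂ (l • ν₁) (l • ν₂) = ((l : ℝ) : EReal) * ETsgn C F₁ F₂ ν₁ ν₂) ∧
    (∀ (ν₁ ν₁' : SignedMeasure X₁) (ν₂ ν₂' : SignedMeasure X₂) (t : ℝ), 0 ≤ t → t ≤ 1 →
        ETsgn C F₁ F₂ (t • ν₁ + (1 - t) • ν₁') (t • ν₂ + (1 - t) • ν₂')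
          ≤ ((t : ℝ) : EReal) * ETsgn C F₁ F₂ ν₁ ν₂
            + ((1 - t : ℝ) : EReal) * ETsgn C F₁ F₂ ν₁' ν₂') := by
  have hk (x) (p) : ((-(-K).toNNReal : ℝ) : EReal) ≤ C x p :=
    (EReal.coe_le_coe_iff.2 (neg_le.1 (Real.le_coe_toNNReal (-K)))).trans (hK x p)
  refine ⟨ETsgn_ne_bot hC hk hF, fun l hl => ETsgn_smul hC hk hF hl,
    fun ν₁ ν₁' ν₂ ν₂' t ht₀ ht₁ => ?_⟩
  rw [← ETsgn_smul hC hk hF ht₀, ← ETsgn_smul hC hk hF (sub_nonneg.2 ht₁)]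
  exact ETsgn_add_le hC hk hconv hF _ _ _ _

theorem stmt11
    {X₁ : Type*} [MetricSpace X₁] [PolishSpace X₁] [MeasurableSpace X₁] [BorelSpace X₁]
    {X₂ : Type*} [MetricSpace X₂] [PolishSpace X₂] [MeasurableSpace X₂] [BorelSpace X₂]
    [Nonempty X₂]
    (C : X₁ → ProbabilityMeasure X₂ → EReal)
    (hClsc : LowerSemicontinuous fun q : X₁ × ProbabilityMeasure X₂ => C q.1 q.2)
    (hCbdd : ∃ K : ℝ, ∀ x p, (K : EReal) ≤ C x p)
    (hCconv : ∀ (x : X₁) (p q m : ProbabilityMeasure X₂) (t : ℝ), 0 ≤ t → t ≤ 1 →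
      (m : Measure X₂) = ENNReal.ofReal t • (p : Measure X₂)
          + ENNReal.ofReal (1 - t) • (q : Measure X₂) →
      C x m ≤ (t : EReal) * C x p + ((1 - t : ℝ) : EReal) * C x q)
    (F₁ F₂ : EntropyFn) (hF₁ : F₁.Superlinear) (hF₂ : F₂.Superlinear) :
    (∀ (ν₁ : SignedMeasure X₁) (ν₂ : SignedMeasure X₂), ETsgn C F₁ F₂ ν₁ ν₂ ≠ ⊥) ∧
    (∀ (l : ℝ), 0 ≤ l → ∀ (ν₁ : SignedMeasure X₁) (ν₂ : SignedMeasure X₂),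
        ETsgn C F₁ F₂ (l • ν₁) (l • ν₂) = ((l : ℝ) : EReal) * ETsgn C F₁ F₂ ν₁ ν₂) ∧
    (∀ (ν₁ ν₁' : SignedMeasure X₁) (ν₂ ν₂' : SignedMeasure X₂) (t : ℝ), 0 ≤ t → t ≤ 1 →
        ETsgn C F₁ F₂ (t • ν₁ + (1 - t) • ν₁') (t • ν₂ + (1 - t) • ν₂')
          ≤ ((t : ℝ) : EReal) * ETsgn C F₁ F₂ ν₁ ν₂
            + ((1 - t : ℝ) : EReal) * ETsgn C F₁ F₂ ν₁' ν₂') := by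
  obtain ⟨K, hK⟩ := hCbdd
  exact stmt11_general (measurable_of_lowerSemicontinuous_prod_probabilityMeasure hClsc) hK hCconv
    (by simp [show F₁.recC = ∞ from hF₁])
end
end

section
/- Let X₁, X₂ be Polish metric spaces, C : X₁ × 𝒫(X₂) → (−∞,+∞] lower semi-continuous, bounded from below, with C(x₁,·) convex for every x₁, and let F₁, F₂ be superlinear admissible entropy functions such that F₂ has property (BM) on X₂. Then Λ_ET^< = Λ_R. -/
open MeasureTheory Filter Set Topology
open scoped ENNReal NNReal BoundedContinuousFunction

noncomputable section

/-!
The inclusion `Λ_R ⊆ Λ_ET` is Fenchel's inequality `ψ ≤ F(r) + r R*(ψ)`, together with its limit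
`-R*(ψ) ≤ F'_∞`: integrated along the Lebesgue decomposition of `γᵢ` with respect to `μᵢ`, they
give `∫ φᵢ dμᵢ ≤ ℱᵢ(γᵢ|μᵢ) + ∫ Rᵢ*(φᵢ) dγᵢ`, and disintegrating `γ` along `γ₁` bounds the sum of
the two conjugate terms by `∫ C(x, γ_x) dγ₁(x)`.

Conversely, fix `x` and `p` and test the constraint defining `Λ_ET` with `μ₁ = t δ_x`, `μ₂ = s p`
and the plan `δ_x ⊗ p`, whose entropies are `R₁(t)` and `∫ R₂(s) dp`. If `s` is the function
provided by (BM), so that `R₂(s) = s φ₂ - R₂*(φ₂)`, what remains is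
`t φ₁(x) - R₁(t) + ∫ R₂*(φ₂) dp ≤ C(x, p)`, and the supremum over `t ≥ 0` gives the claim.
-/

section EIntegral

variable {α : Type*} [MeasurableSpace α] {μ : Measure α}

theorem posE_eq_toENNReal (a : EReal) : posE a = a.toENNReal := rfl

theorem posE_sub_posE_neg (a : EReal) : (posE a : EReal) - (posE (-a) : EReal) = a := by
  simp only [posE_eq_toENNReal, EReal.coe_toENNReal_eq_max]
  rcases le_total 0 a with ha | ha
  · rw [max_eq_right ha, max_eq_left (EReal.neg_le_zero.2 ha), sub_zero]
  · rw [max_eq_left ha, max_eq_right (by simpa using EReal.neg_le_neg_iff.2 ha), zero_sub, neg_neg]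

theorem eIntegral_mono_ae {f g : α → EReal} (h : f ≤ᵐ[μ] g) : eIntegral μ f ≤ eIntegral μ g := by
  refine EReal.sub_le_sub (EReal.coe_ennreal_le_coe_ennreal_iff.2 (lintegral_mono_ae ?_))
    (EReal.coe_ennreal_le_coe_ennreal_iff.2 (lintegral_mono_ae ?_)) <;>
  filter_upwards [h] with x hx
  · exact EReal.toENNReal_le_toENNReal hx
  · exact EReal.toENNReal_le_toENNReal (EReal.neg_le_neg_iff.2 hx)

theorem eIntegral_coe {f : α → ℝ} (hf : Integrable f μ) :
    eIntegral μ (fun x => (f x : EReal)) = ((∫ x, f x ∂μ : ℝ) : EReal) := by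
  simp only [eIntegral, posE_eq_toENNReal, ← EReal.coe_neg, EReal.real_coe_toENNReal]
  rw [integral_eq_lintegral_pos_part_sub_lintegral_neg_part hf, EReal.coe_sub,
    EReal.coe_ennreal_toReal hf.lintegral_lt_top.ne, EReal.coe_ennreal_toReal]
  exact hf.neg.lintegral_lt_top.ne

theorem eIntegral_dirac [MeasurableSingletonClass α] (a : α) (f : α → EReal) :
    eIntegral (Measure.dirac a) f = f a := by
  rw [eIntegral, lintegral_dirac, lintegral_dirac, posE_sub_posE_neg]

theorem coe_integral_le_lintegral_ofReal {f : α → ℝ} (hf : Integrable f μ) :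
    ((∫ x, f x ∂μ : ℝ) : EReal) ≤ ((∫⁻ x, ENNReal.ofReal (f x) ∂μ : ℝ≥0∞) : EReal) := by
  rw [← eIntegral_coe hf]
  exact (EReal.sub_le_sub le_rfl (EReal.coe_ennreal_nonneg _)).trans_eq (sub_zero _)

theorem coe_lintegral_eq_coe_integral {f : α → ℝ≥0∞} {g : α → ℝ} (hg : Integrable g μ)
    (hfg : ∀ x, (f x : EReal) = (g x : EReal)) :
    ((∫⁻ x, f x ∂μ : ℝ≥0∞) : EReal) = ((∫ x, g x ∂μ : ℝ) : EReal) := by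
  have hg_nonneg : ∀ x, 0 ≤ g x := fun x =>
    EReal.coe_nonneg.1 ((EReal.coe_ennreal_nonneg (f x)).trans_eq (hfg x))
  have hf : ∀ x, f x = ENNReal.ofReal (g x) := fun x => by
    rw [← EReal.toENNReal_coe (x := f x), hfg, EReal.real_coe_toENNReal]
  simp only [hf]
  rw [← ofReal_integral_eq_lintegral_ofReal hg (ae_of_all _ hg_nonneg), EReal.coe_ennreal_ofReal,
    max_eq_left (integral_nonneg hg_nonneg)]

end EIntegral

section LebesgueDecomposition

variable {α : Type*} [MeasurableSpace α]

theorem integrable_toReal_rnDeriv_mul {γ μ : Measure α} [SigmaFinite γ] {g : α → ℝ}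
    (hg : Integrable g γ) : Integrable (fun x => (γ.rnDeriv μ x).toReal * g x) μ := by
  simpa only [smul_eq_mul] using
    (integrable_withDensity_iff_integrable_smul' (Measure.measurable_rnDeriv γ μ)
      (Measure.rnDeriv_lt_top γ μ)).1 (hg.mono_measure (Measure.withDensity_rnDeriv_le γ μ))

theorem integral_toReal_rnDeriv_mul_add_integral_singularPart {γ μ : Measure α} [SigmaFinite γ]
    [γ.HaveLebesgueDecomposition μ] {g : α → ℝ} (hg : Integrable g γ) :
    ∫ x, (γ.rnDeriv μ x).toReal * g x ∂μ + ∫ x, g x ∂γ.singularPart μ = ∫ x, g x ∂γ := by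
  conv_rhs => rw [← Measure.rnDeriv_add_singularPart γ μ]
  rw [integral_add_measure (hg.mono_measure (Measure.withDensity_rnDeriv_le γ μ))
      (hg.mono_measure (Measure.singularPart_le γ μ)),
    integral_withDensity_eq_integral_toReal_smul (Measure.measurable_rnDeriv γ μ)
      (Measure.rnDeriv_lt_top γ μ)]
  simp only [smul_eq_mul]

variable {p : Measure α} {f : α → ℝ≥0∞}

theorem restrict_add_withDensity_withDensity_inv (hf : Measurable f) (hf_top : ∀ x, f x ≠ ∞) :
    p.restrict {x | f x = 0} + (p.withDensity f).withDensity f⁻¹ = p := by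
  have hS : MeasurableSet {x | f x = 0} := hf (measurableSet_singleton 0)
  have hmul : f * f⁻¹ = {x | f x = 0}ᶜ.indicator 1 := by
    funext x
    by_cases hx : f x = 0
    · simp [hx]
    · simp [hx, ENNReal.mul_inv_cancel hx (hf_top x)]
  rw [← withDensity_mul p hf hf.inv, hmul, withDensity_indicator_one hS.compl,
    Measure.restrict_add_restrict_compl hS]

theorem restrict_mutuallySingular_withDensity (hf : Measurable f) :
    p.restrict {x | f x = 0} ⟂ₘ p.withDensity f := by
  have hS : MeasurableSet {x | f x = 0} := hf (measurableSet_singleton 0)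
  refine ⟨{x | f x = 0}ᶜ, hS.compl, ?_, ?_⟩
  · rw [Measure.restrict_apply hS.compl, compl_inter_self, measure_empty]
  · rw [compl_compl, withDensity_apply _ hS]
    exact setLIntegral_eq_zero hS fun x hx => hx

theorem singularPart_withDensity_self (hf : Measurable f) (hf_top : ∀ x, f x ≠ ∞) :
    p.singularPart (p.withDensity f) = p.restrict {x | f x = 0} :=
  (Measure.eq_singularPart hf.inv (restrict_mutuallySingular_withDensity hf)
    (restrict_add_withDensity_withDensity_inv hf hf_top).symm).symm

theorem rnDeriv_withDensity_self [SigmaFinite p] (hf : Measurable f) (hf_top : ∀ x, f x ≠ ∞) :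
    p.rnDeriv (p.withDensity f) =ᵐ[p.withDensity f] f⁻¹ :=
  haveI : SigmaFinite (p.withDensity f) := SigmaFinite.withDensity_of_ne_top (ae_of_all _ hf_top)
  (Measure.eq_rnDeriv hf.inv (restrict_mutuallySingular_withDensity hf)
    (restrict_add_withDensity_withDensity_inv hf hf_top).symm).symm

end LebesgueDecomposition

namespace EntropyFn

variable (F : EntropyFn)

theorem revF_of_pos {r : ℝ} (hr : 0 < r) : F.revF r = ENNReal.ofReal r * F.F (1 / r) := if_pos hr

theorem revF_of_nonpos {r : ℝ} (hr : r ≤ 0) : F.revF r = F.recC := if_neg hr.not_gt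

theorem sub_revF_le_revConj {s : ℝ} (hs : 0 ≤ s) (ψ : ℝ) :
    ((s * ψ : ℝ) : EReal) - (F.revF s : EReal) ≤ F.revConj ψ :=
  le_iSup (fun s : Ici (0 : ℝ) => (((s : ℝ) * ψ : ℝ) : EReal) - (F.revF (s : ℝ) : EReal)) ⟨s, hs⟩

theorem monotone_revConj : Monotone F.revConj := fun _ _ hab =>
  iSup_mono fun s => EReal.sub_le_sub
    (EReal.coe_le_coe_iff.2 (mul_le_mul_of_nonneg_left hab s.2)) le_rfl

theorem revConj_ne_bot (ψ : ℝ) : F.revConj ψ ≠ ⊥ := by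
  obtain ⟨s, hs, hFs⟩ := F.dom
  have hrev : F.revF (1 / s) ≠ ∞ := by
    rw [F.revF_of_pos (one_div_pos.2 hs), one_div_one_div]
    exact ENNReal.mul_ne_top ENNReal.ofReal_ne_top hFs
  refine ne_bot_of_le_ne_bot ?_ (F.sub_revF_le_revConj (one_div_pos.2 hs).le ψ)
  rw [← EReal.coe_ennreal_toReal hrev, ← EReal.coe_sub]
  exact EReal.coe_ne_bot _

variable {F}

/- By lower semicontinuity `F > b` on some `[0, δ)`, so the slopes `s > 1 / δ` contribute
`s b - s F(1 / s) ≤ 0` and the remaining ones at most `|b| / δ`. -/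
theorem revConj_ne_top {b : ℝ} (hb : (b : EReal) < (F.F 0 : EReal)) : F.revConj b ≠ ⊤ := by
  have hlsc : LowerSemicontinuousOn (fun r => (F.F r : EReal)) (Ici 0) :=
    continuous_coe_ennreal_ereal.comp_lowerSemicontinuousOn F.lsc
      fun _ _ => EReal.coe_ennreal_le_coe_ennreal_iff.2
  obtain ⟨δ, hδ, hbF⟩ : ∃ δ > 0, ∀ r : ℝ, 0 ≤ r → r < δ → (b : EReal) < (F.F r : EReal) := by
    obtain ⟨δ, hδ, h⟩ :=
      Metric.eventually_nhds_iff.1 (eventually_nhdsWithin_iff.1 (hlsc 0 self_mem_Ici _ hb))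
    refine ⟨δ, hδ, fun r hr hrδ => h ?_ hr⟩
    rwa [Real.dist_eq, sub_zero, abs_of_nonneg hr]
  refine ne_top_of_le_ne_top (EReal.coe_ne_top (1 / δ * |b|)) (iSup_le fun ⟨s, hs⟩ => ?_)
  rcases le_or_gt s (1 / δ) with hsδ | hsδ
  · calc ((s * b : ℝ) : EReal) - (F.revF s : EReal)
        ≤ ((s * b : ℝ) : EReal) - 0 := EReal.sub_le_sub le_rfl (EReal.coe_ennreal_nonneg _)
      _ = ((s * b : ℝ) : EReal) := sub_zero _
      _ ≤ ((1 / δ * |b| : ℝ) : EReal) := EReal.coe_le_coe_iff.2 <|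
          (mul_le_mul_of_nonneg_left (le_abs_self b) hs).trans
            (mul_le_mul_of_nonneg_right hsδ (abs_nonneg b))
  · have hs_pos : 0 < s := (one_div_pos.2 hδ).trans hsδ
    have hsb : ((s * b : ℝ) : EReal) ≤ (F.revF s : EReal) := by
      rw [F.revF_of_pos hs_pos, EReal.coe_mul, EReal.coe_ennreal_mul, EReal.coe_ennreal_ofReal,
        max_eq_left hs]
      exact mul_le_mul_of_nonneg_left
        (hbF _ (one_div_nonneg.2 hs) ((one_div_lt hδ hs_pos).1 hsδ)).le (EReal.coe_nonneg.2 hs)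
    calc ((s * b : ℝ) : EReal) - (F.revF s : EReal)
        ≤ (F.revF s : EReal) - (F.revF s : EReal) := EReal.sub_le_sub hsb le_rfl
      _ ≤ 0 := EReal.sub_self_le_zero
      _ ≤ ((1 / δ * |b| : ℝ) : EReal) := EReal.coe_nonneg.2 (by positivity)

theorem ofReal_sub_mul_le {ψ g r : ℝ} (hψ : (ψ : EReal) ≤ (F.F 0 : EReal))
    (hg : F.revConj ψ ≤ (g : EReal)) (hr : 0 ≤ r) : ENNReal.ofReal (ψ - r * g) ≤ F.F r := by
  rcases hr.eq_or_lt with rfl | hr_pos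
  · simpa using EReal.toENNReal_le_toENNReal hψ
  · rcases eq_or_ne (F.F r) ∞ with htop | hfin
    · exact htop ▸ le_top
    · have hconj : 1 / r * ψ - 1 / r * (F.F r).toReal ≤ g := by
        have h := (F.sub_revF_le_revConj (one_div_pos.2 hr_pos).le ψ).trans hg
        rw [F.revF_of_pos (one_div_pos.2 hr_pos), one_div_one_div, ← ENNReal.ofReal_toReal hfin,
          ← ENNReal.ofReal_mul (one_div_pos.2 hr_pos).le, EReal.coe_ennreal_ofReal,
          max_eq_left (by positivity)] at h
        exact_mod_cast h
      refine ENNReal.ofReal_le_of_le_toReal ?_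
      calc ψ - r * g
          ≤ ψ - r * (1 / r * ψ - 1 / r * (F.F r).toReal) := by gcongr
        _ = (F.F r).toReal := by field_simp; ring

theorem ofReal_neg_le_recC {ψ g : ℝ} (hg : F.revConj ψ ≤ (g : EReal)) :
    ENNReal.ofReal (-g) ≤ F.recC := by
  have h := (F.sub_revF_le_revConj le_rfl ψ).trans hg
  rw [F.revF_of_nonpos le_rfl, zero_mul, EReal.coe_zero, zero_sub] at h
  simpa using EReal.toENNReal_le_toENNReal (EReal.neg_le_of_neg_le h)

section Entropy

variable {X : Type*} [MeasurableSpace X]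

theorem coe_integral_sub_integral_le_entF {γ μ : Measure X} [SigmaFinite γ]
    [γ.HaveLebesgueDecomposition μ] {ψ g : X → ℝ} (hψ_int : Integrable ψ μ)
    (hg_int : Integrable g γ) (hψ : ∀ x, (ψ x : EReal) ≤ (F.F 0 : EReal))
    (hg : ∀ x, F.revConj (ψ x) ≤ (g x : EReal)) :
    ((∫ x, ψ x ∂μ - ∫ x, g x ∂γ : ℝ) : EReal) ≤ (entF F γ μ : EReal) := by
  have hg_ac : Integrable (fun x => (γ.rnDeriv μ x).toReal * g x) μ :=
    integrable_toReal_rnDeriv_mul hg_int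
  have hg_sing : Integrable g (γ.singularPart μ) :=
    hg_int.mono_measure (Measure.singularPart_le γ μ)
  have h_ac : ((∫ x, (ψ x - (γ.rnDeriv μ x).toReal * g x) ∂μ : ℝ) : EReal) ≤
      ((∫⁻ x, F.F (γ.rnDeriv μ x).toReal ∂μ : ℝ≥0∞) : EReal) :=
    (coe_integral_le_lintegral_ofReal (hψ_int.sub hg_ac)).trans <|
      EReal.coe_ennreal_le_coe_ennreal_iff.2 <| lintegral_mono fun x =>
        ofReal_sub_mul_le (hψ x) (hg x) ENNReal.toReal_nonneg
  have h_sing : ((∫ x, -g x ∂γ.singularPart μ : ℝ) : EReal) ≤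
      ((F.recC * γ.singularPart μ univ : ℝ≥0∞) : EReal) :=
    (coe_integral_le_lintegral_ofReal hg_sing.neg).trans <|
      EReal.coe_ennreal_le_coe_ennreal_iff.2 <|
        (lintegral_mono fun x => ofReal_neg_le_recC (hg x)).trans_eq (lintegral_const _)
  calc ((∫ x, ψ x ∂μ - ∫ x, g x ∂γ : ℝ) : EReal)
      = ((∫ x, (ψ x - (γ.rnDeriv μ x).toReal * g x) ∂μ : ℝ) : EReal) +
          ((∫ x, -g x ∂γ.singularPart μ : ℝ) : EReal) := by
        rw [← EReal.coe_add, integral_sub hψ_int hg_ac, integral_neg,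
          ← integral_toReal_rnDeriv_mul_add_integral_singularPart (μ := μ) hg_int]
        congr 1
        ring
    _ ≤ (entF F γ μ : EReal) := by
        rw [entF, EReal.coe_ennreal_add]
        exact add_le_add h_ac h_sing

variable (F)

theorem entF_withDensity_le_lintegral_revF (p : Measure X) [SigmaFinite p] {s : X → ℝ}
    (hs : Measurable s) :
    entF F p (p.withDensity fun x => ENNReal.ofReal (s x)) ≤ ∫⁻ x, F.revF (s x) ∂p := by
  set f : X → ℝ≥0∞ := fun x => ENNReal.ofReal (s x)
  have hf : Measurable f := hs.ennreal_ofReal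
  have hf_top : ∀ x, f x ≠ ∞ := fun x => ENNReal.ofReal_ne_top
  have hS : MeasurableSet {x | f x = 0} := hf (measurableSet_singleton 0)
  have h_sing : F.recC * p.singularPart (p.withDensity f) univ =
      ∫⁻ x in {x | f x = 0}, F.revF (s x) ∂p := by
    rw [singularPart_withDensity_self hf hf_top, Measure.restrict_apply_univ, ← setLIntegral_const]
    exact setLIntegral_congr_fun hS fun x hx =>
      (F.revF_of_nonpos (ENNReal.ofReal_eq_zero.1 hx)).symm
  have h_ac : ∫⁻ x, F.F (p.rnDeriv (p.withDensity f) x).toReal ∂p.withDensity f ≤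
      ∫⁻ x in {x | f x = 0}ᶜ, F.revF (s x) ∂p := by
    calc ∫⁻ x, F.F (p.rnDeriv (p.withDensity f) x).toReal ∂p.withDensity f
        = ∫⁻ x, F.F (f x)⁻¹.toReal ∂p.withDensity f :=
          lintegral_congr_ae <| (rnDeriv_withDensity_self hf hf_top).fun_comp (F.F ·.toReal)
      _ ≤ ∫⁻ x, f x * F.F (f x)⁻¹.toReal ∂p := lintegral_withDensity_le_lintegral_mul p hf _
      _ ≤ ∫⁻ x, {x | f x = 0}ᶜ.indicator (fun x => F.revF (s x)) x ∂p := by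
          refine lintegral_mono fun x => ?_
          by_cases hx : f x = 0
          · simp [hx]
          · have hsx : 0 < s x := not_le.1 fun h => hx (ENNReal.ofReal_eq_zero.2 h)
            rw [indicator_of_mem (by exact hx), F.revF_of_pos hsx, ENNReal.toReal_inv,
              ENNReal.toReal_ofReal hsx.le, one_div]
      _ = ∫⁻ x in {x | f x = 0}ᶜ, F.revF (s x) ∂p := lintegral_indicator hS.compl _
  calc entF F p (p.withDensity f)
      ≤ ∫⁻ x in {x | f x = 0}ᶜ, F.revF (s x) ∂p + ∫⁻ x in {x | f x = 0}, F.revF (s x) ∂p :=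
        add_le_add h_ac h_sing.le
    _ = ∫⁻ x, F.revF (s x) ∂p := by rw [add_comm, lintegral_add_compl _ hS]

end Entropy

/-- The condition `sup ψ < F(0)`, witnessed by a real number between the two sides. On an empty
domain it still asks for a real number below `F(0)`, which always exists. -/
def SupLtEvalZero {X : Type*} (F : EntropyFn) (ψ : X → ℝ) : Prop :=
  ∃ b : ℝ, (b : EReal) < (F.F 0 : EReal) ∧ ∀ x, ψ x ≤ b

namespace SupLtEvalZero

variable {X : Type*} {ψ : X → ℝ}

theorem coe_le (h : F.SupLtEvalZero ψ) (x : X) : (ψ x : EReal) ≤ (F.F 0 : EReal) :=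
  let ⟨_, hb, hψ⟩ := h
  (EReal.coe_le_coe_iff.2 (hψ x)).trans hb.le

theorem coe_toReal_revConj (h : F.SupLtEvalZero ψ) (x : X) :
    ((F.revConj (ψ x)).toReal : EReal) = F.revConj (ψ x) :=
  let ⟨_, hb, hψ⟩ := h
  EReal.coe_toReal (ne_top_of_le_ne_top (revConj_ne_top hb) (F.monotone_revConj (hψ x)))
    (F.revConj_ne_bot _)

theorem integrable_toReal_revConj [MeasurableSpace X] (h : F.SupLtEvalZero ψ)
    (hψ_meas : Measurable ψ) (hψ_bdd : BddBelow (range ψ)) (μ : Measure X) [IsFiniteMeasure μ] :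
    Integrable (fun x => (F.revConj (ψ x)).toReal) μ := by
  have hψ_real := h.coe_toReal_revConj
  obtain ⟨b, hb, hψb⟩ := h
  obtain ⟨m, hm⟩ := hψ_bdd
  refine Integrable.of_mem_Icc (F.revConj m).toReal (F.revConj b).toReal
    (F.monotone_revConj.measurable.comp hψ_meas).ereal_toReal.aemeasurable
    (ae_of_all _ fun x => ⟨?_, ?_⟩)
  · exact EReal.toReal_le_toReal (F.monotone_revConj (hm (mem_range_self x)))
      (F.revConj_ne_bot m) (hψ_real x ▸ EReal.coe_ne_top _)
  · exact EReal.toReal_le_toReal (F.monotone_revConj (hψb x)) (F.revConj_ne_bot _)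
      (revConj_ne_top hb)

theorem eIntegral_revConj [MeasurableSpace X] (h : F.SupLtEvalZero ψ) (hψ_meas : Measurable ψ)
    (hψ_bdd : BddBelow (range ψ)) (μ : Measure X) [IsFiniteMeasure μ] :
    eIntegral μ (fun x => F.revConj (ψ x)) = ((∫ x, (F.revConj (ψ x)).toReal ∂μ : ℝ) : EReal) := by
  rw [← eIntegral_coe (h.integrable_toReal_revConj hψ_meas hψ_bdd μ)]
  simp only [h.coe_toReal_revConj]

end SupLtEvalZero

end EntropyFn

section WeakCost

variable {X₁ X₂ : Type*} [MeasurableSpace X₁] [MeasurableSpace X₂] [StandardBorelSpace X₂]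
  [Nonempty X₂] {C : X₁ → ProbabilityMeasure X₂ → EReal}

theorem coe_integral_add_integral_le_eIntegral_condKernel {γ : Measure (X₁ × X₂)}
    [IsFiniteMeasure γ] {g₁ : X₁ → ℝ} {g₂ : X₂ → ℝ} (hg₁ : Integrable g₁ γ.fst)
    (hg₂ : Integrable g₂ γ.snd)
    (hC : ∀ (x : X₁) (p : ProbabilityMeasure X₂),
      ((g₁ x + ∫ y, g₂ y ∂(p : Measure X₂) : ℝ) : EReal) ≤ C x p) :
    ((∫ x, g₁ x ∂γ.fst + ∫ y, g₂ y ∂γ.snd : ℝ) : EReal) ≤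
      eIntegral γ.fst (fun x => C x ⟨γ.condKernel x, inferInstance⟩) := by
  have hg₂γ : Integrable (fun q : X₁ × X₂ => g₂ q.2) γ := hg₂.comp_measurable measurable_snd
  have hg₂_cond : Integrable (fun x => ∫ y, g₂ y ∂γ.condKernel x) γ.fst :=
    hg₂γ.integral_condKernel
  calc ((∫ x, g₁ x ∂γ.fst + ∫ y, g₂ y ∂γ.snd : ℝ) : EReal)
      = ((∫ x, (g₁ x + ∫ y, g₂ y ∂γ.condKernel x) ∂γ.fst : ℝ) : EReal) := by
        rw [integral_add hg₁ hg₂_cond, Measure.integral_condKernel hg₂γ, Measure.snd,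
          integral_map measurable_snd.aemeasurable hg₂.aestronglyMeasurable]
    _ = eIntegral γ.fst (fun x => ((g₁ x + ∫ y, g₂ y ∂γ.condKernel x : ℝ) : EReal)) :=
        (eIntegral_coe (hg₁.add hg₂_cond)).symm
    _ ≤ eIntegral γ.fst (fun x => C x ⟨γ.condKernel x, inferInstance⟩) :=
        eIntegral_mono_ae <| ae_of_all _ fun x => hC x ⟨γ.condKernel x, inferInstance⟩

theorem condKernel_dirac_prod [MeasurableSingletonClass X₁] (x : X₁) (p : Measure X₂)
    [IsProbabilityMeasure p] : ((Measure.dirac x).prod p).condKernel x = p := by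
  have h := ProbabilityTheory.eq_condKernel_of_measure_eq_compProd
    (ρ := (Measure.dirac x).prod p) (ProbabilityTheory.Kernel.const X₁ p)
    (by rw [Measure.fst_prod, Measure.compProd_const])
  rw [Measure.fst_prod, ae_dirac_eq] at h
  exact h.symm

variable (C)

theorem wCost_dirac_prod [MeasurableSingletonClass X₁] (F₁ F₂ : EntropyFn) (μ₁ : Measure X₁)
    (μ₂ : Measure X₂) (x : X₁) (p : ProbabilityMeasure X₂) :
    wCost C F₁ F₂ μ₁ μ₂ ((Measure.dirac x).prod (p : Measure X₂)) inferInstance =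
      (entF F₁ (Measure.dirac x) μ₁ : EReal) + (entF F₂ (p : Measure X₂) μ₂ : EReal) + C x p := by
  rw [wCost, Measure.fst_prod, Measure.snd_prod, eIntegral_dirac]
  congr 2
  exact Subtype.ext (condKernel_dirac_prod x (p : Measure X₂))

theorem wOpt_smul_dirac_withDensity_le [MeasurableSingletonClass X₁] (F₁ F₂ : EntropyFn) (t : ℝ)
    {s : X₂ → ℝ} (hs : Measurable s) (x : X₁) (p : ProbabilityMeasure X₂) :
    wOpt C F₁ F₂ (ENNReal.ofReal t • Measure.dirac x)
        ((p : Measure X₂).withDensity fun y => ENNReal.ofReal (s y)) ≤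
      (F₁.revF t : EReal) + ((∫⁻ y, F₂.revF (s y) ∂(p : Measure X₂) : ℝ≥0∞) : EReal) + C x p := by
  have h₁ : entF F₁ (Measure.dirac x) (ENNReal.ofReal t • Measure.dirac x) ≤ F₁.revF t := by
    have h := F₁.entF_withDensity_le_lintegral_revF (Measure.dirac x) (measurable_const (a := t))
    rwa [withDensity_const, lintegral_dirac] at h
  have h₂ := F₂.entF_withDensity_le_lintegral_revF (p : Measure X₂) hs
  calc wOpt C F₁ F₂ (ENNReal.ofReal t • Measure.dirac x)
        ((p : Measure X₂).withDensity fun y => ENNReal.ofReal (s y))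
      ≤ wCost C F₁ F₂ (ENNReal.ofReal t • Measure.dirac x)
          ((p : Measure X₂).withDensity fun y => ENNReal.ofReal (s y))
          ((Measure.dirac x).prod (p : Measure X₂)) inferInstance := sInf_le ⟨_, _, rfl⟩
    _ ≤ (F₁.revF t : EReal) + ((∫⁻ y, F₂.revF (s y) ∂(p : Measure X₂) : ℝ≥0∞) : EReal) +
          C x p := by
        rw [wCost_dirac_prod]
        exact add_le_add (add_le_add (EReal.coe_ennreal_le_coe_ennreal_iff.2 h₁)
          (EReal.coe_ennreal_le_coe_ennreal_iff.2 h₂)) le_rfl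

end WeakCost

section DualFeasibility

theorem HasBM.exists_lintegral_revF_eq {X : Type*} [TopologicalSpace X] [MeasurableSpace X]
    [OpensMeasurableSpace X] {F : EntropyFn} (hBM : HasBM X F) {ψ : X →ᵇ ℝ}
    (hψ : F.SupLtEvalZero ψ) (p : Measure X) [IsFiniteMeasure p] :
    ∃ s : X → ℝ, Measurable s ∧ (∀ x, 0 < s x) ∧ Integrable s p ∧
      ((∫⁻ x, F.revF (s x) ∂p : ℝ≥0∞) : EReal) =
        ((∫ x, s x * ψ x ∂p - ∫ x, (F.revConj (ψ x)).toReal ∂p : ℝ) : EReal) := by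
  obtain ⟨s, hs_meas, ⟨M, hM⟩, hs_pos, hs⟩ := hBM ψ hψ
  have hs_int : Integrable s p := .of_bound hs_meas.aestronglyMeasurable M (ae_of_all _ hM)
  have hsψ : Integrable (fun x => s x * ψ x) p :=
    hs_int.mul_bdd (c := ‖ψ‖) ψ.continuous.measurable.aestronglyMeasurable
      (ae_of_all _ ψ.norm_coe_le_norm)
  have hconj : Integrable (fun x => (F.revConj (ψ x)).toReal) p :=
    hψ.integrable_toReal_revConj ψ.continuous.measurable ψ.isBounded_range.bddBelow p
  refine ⟨s, hs_meas, hs_pos, hs_int, ?_⟩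
  rw [← integral_sub hsψ hconj]
  refine coe_lintegral_eq_coe_integral (hsψ.sub hconj) fun x => ?_
  rw [EReal.coe_sub, ← hs x, ← hψ.coe_toReal_revConj x, EReal.toReal_coe,
    EReal.add_sub_cancel_right]

theorem coe_sub_add_le_of_add_le_add_sub_add {a b g : ℝ} {r : ℝ≥0∞} {c : EReal}
    (h : ((a + b : ℝ) : EReal) ≤ (r : EReal) + ((b - g : ℝ) : EReal) + c) :
    (a : EReal) - (r : EReal) + (g : EReal) ≤ c := by
  rcases eq_or_ne r ∞ with rfl | hr
  · simp
  rw [← EReal.coe_ennreal_toReal hr] at h ⊢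
  induction c using EReal.rec with
  | bot => exact absurd (le_bot_iff.1 (h.trans_eq (EReal.add_bot _))) (EReal.coe_ne_bot _)
  | top => exact le_top
  | coe c =>
    norm_cast at h ⊢
    linarith

variable {X₁ X₂ : Type*} [TopologicalSpace X₁] [MeasurableSpace X₁]
  [TopologicalSpace X₂] [MeasurableSpace X₂] [OpensMeasurableSpace X₂] [StandardBorelSpace X₂]
  [Nonempty X₂] {C : X₁ → ProbabilityMeasure X₂ → EReal} {F₁ F₂ : EntropyFn}

theorem revConj_add_eIntegral_revConj_le [MeasurableSingletonClass X₁] (hBM : HasBM X₂ F₂)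
    {φ : (X₁ →ᵇ ℝ) × (X₂ →ᵇ ℝ)} (hφ : φ ∈ lamETSet C F₁ F₂) (h₂ : F₂.SupLtEvalZero φ.2)
    (x : X₁) (p : ProbabilityMeasure X₂) :
    F₁.revConj (φ.1 x) + eIntegral (p : Measure X₂) (fun y => F₂.revConj (φ.2 y)) ≤ C x p := by
  obtain ⟨s, hs_meas, hs_pos, hs_int, hsR⟩ := hBM.exists_lintegral_revF_eq h₂ (p : Measure X₂)
  rw [h₂.eIntegral_revConj φ.2.continuous.measurable φ.2.isBounded_range.bddBelow,
    ← EReal.le_sub_iff_add_le (.inl (EReal.coe_ne_bot _)) (.inl (EReal.coe_ne_top _))]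
  refine iSup_le fun ⟨t, ht⟩ => ?_
  rw [EReal.le_sub_iff_add_le (.inl (EReal.coe_ne_bot _)) (.inl (EReal.coe_ne_top _))]
  have hint₁ : ∫ x', φ.1 x' ∂(ENNReal.ofReal t • Measure.dirac x) = t * φ.1 x := by
    rw [integral_smul_measure, integral_dirac, ENNReal.toReal_ofReal ht, smul_eq_mul]
  have hint₂ : ∫ y, φ.2 y ∂(p : Measure X₂).withDensity (fun y => ENNReal.ofReal (s y)) =
      ∫ y, s y * φ.2 y ∂(p : Measure X₂) := by
    rw [integral_withDensity_eq_integral_toReal_smul hs_meas.ennreal_ofReal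
      (ae_of_all _ fun _ => ENNReal.ofReal_lt_top)]
    simp only [ENNReal.toReal_ofReal (hs_pos _).le, smul_eq_mul]
  have hET := (hφ _ _ (Measure.smul_finite _ ENNReal.ofReal_ne_top)
    (isFiniteMeasure_withDensity_ofReal hs_int.2)).trans
      (wOpt_smul_dirac_withDensity_le C F₁ F₂ t hs_meas x p)
  rw [hint₁, hint₂, hsR] at hET
  exact coe_sub_add_le_of_add_le_add_sub_add hET

variable [OpensMeasurableSpace X₁]

theorem lamRSet_subset_lamETSet : lamRSet C F₁ F₂ ⊆ lamETSet C F₁ F₂ := by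
  rintro φ ⟨h₁ : F₁.SupLtEvalZero φ.1, h₂ : F₂.SupLtEvalZero φ.2, hR⟩ μ₁ μ₂ _ _
  refine le_sInf ?_
  rintro _ ⟨γ, _, rfl⟩
  set g₁ : X₁ → ℝ := fun x => (F₁.revConj (φ.1 x)).toReal
  set g₂ : X₂ → ℝ := fun y => (F₂.revConj (φ.2 y)).toReal
  have hg₁ : Integrable g₁ γ.fst :=
    h₁.integrable_toReal_revConj φ.1.continuous.measurable φ.1.isBounded_range.bddBelow γ.fst
  have hg₂ : Integrable g₂ γ.snd :=
    h₂.integrable_toReal_revConj φ.2.continuous.measurable φ.2.isBounded_range.bddBelow γ.snd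
  have hC : ∀ (x : X₁) (p : ProbabilityMeasure X₂),
      ((g₁ x + ∫ y, g₂ y ∂(p : Measure X₂) : ℝ) : EReal) ≤ C x p := fun x p => by
    rw [EReal.coe_add, h₁.coe_toReal_revConj,
      ← h₂.eIntegral_revConj φ.2.continuous.measurable φ.2.isBounded_range.bddBelow]
    exact hR x p
  have h_ent₁ : ((∫ x, φ.1 x ∂μ₁ - ∫ x, g₁ x ∂γ.fst : ℝ) : EReal) ≤ (entF F₁ γ.fst μ₁ : EReal) :=
    EntropyFn.coe_integral_sub_integral_le_entF (φ.1.integrable μ₁) hg₁ h₁.coe_le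
      fun x => (h₁.coe_toReal_revConj x).ge
  have h_ent₂ : ((∫ y, φ.2 y ∂μ₂ - ∫ y, g₂ y ∂γ.snd : ℝ) : EReal) ≤ (entF F₂ γ.snd μ₂ : EReal) :=
    EntropyFn.coe_integral_sub_integral_le_entF (φ.2.integrable μ₂) hg₂ h₂.coe_le
      fun y => (h₂.coe_toReal_revConj y).ge
  calc (((∫ x, φ.1 x ∂μ₁) + ∫ y, φ.2 y ∂μ₂ : ℝ) : EReal)
      = ((∫ x, φ.1 x ∂μ₁ - ∫ x, g₁ x ∂γ.fst : ℝ) : EReal) +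
          ((∫ y, φ.2 y ∂μ₂ - ∫ y, g₂ y ∂γ.snd : ℝ) : EReal) +
          ((∫ x, g₁ x ∂γ.fst + ∫ y, g₂ y ∂γ.snd : ℝ) : EReal) := by
        rw [← EReal.coe_add, ← EReal.coe_add]
        congr 1
        ring
    _ ≤ wCost C F₁ F₂ μ₁ μ₂ γ inferInstance :=
        add_le_add (add_le_add h_ent₁ h_ent₂)
          (coe_integral_add_integral_le_eIntegral_condKernel hg₁ hg₂ hC)

theorem stmt12_general [MeasurableSingletonClass X₁] (C : X₁ → ProbabilityMeasure X₂ → EReal)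
    (F₁ F₂ : EntropyFn) (hBM : HasBM X₂ F₂) : lamETltSet C F₁ F₂ = lamRSet C F₁ F₂ :=
  Subset.antisymm
    (fun _ ⟨hET, h₁, h₂⟩ => ⟨h₁, h₂, revConj_add_eIntegral_revConj_le hBM hET h₂⟩)
    (fun _ hR => ⟨lamRSet_subset_lamETSet hR, hR.1, hR.2.1⟩)

end DualFeasibility

theorem stmt12
    {X₁ : Type*} [MetricSpace X₁] [PolishSpace X₁] [MeasurableSpace X₁] [BorelSpace X₁]
    {X₂ : Type*} [MetricSpace X₂] [PolishSpace X₂] [MeasurableSpace X₂] [BorelSpace X₂]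
    [Nonempty X₂]
    (C : X₁ → ProbabilityMeasure X₂ → EReal)
    (hClsc : LowerSemicontinuous fun q : X₁ × ProbabilityMeasure X₂ => C q.1 q.2)
    (hCbdd : ∃ K : ℝ, ∀ x p, (K : EReal) ≤ C x p)
    (hCconv : ∀ (x : X₁) (p q m : ProbabilityMeasure X₂) (t : ℝ), 0 ≤ t → t ≤ 1 →
      (m : Measure X₂) = ENNReal.ofReal t • (p : Measure X₂)
          + ENNReal.ofReal (1 - t) • (q : Measure X₂) →
      C x m ≤ (t : EReal) * C x p + ((1 - t : ℝ) : EReal) * C x q)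
    (F₁ F₂ : EntropyFn) (hF₁ : F₁.Superlinear) (hF₂ : F₂.Superlinear) (hBM : HasBM X₂ F₂) :
    lamETltSet C F₁ F₂ = lamRSet C F₁ F₂ :=
  stmt12_general C F₁ F₂ hBM
end
end
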